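/- arXiv:2102.11226 — 2 statements merged into one kernel-verified Lean document; each statement's English description precedes it below -/
import Mathlib

section
/- Let X, Y be two-dimensional normed spaces and τ : S_X → S_Y a surjective isometry. If the norm of X is piecewise C¹ on S_X, then so is the norm of Y, and the norm of X is differentiable at x ∈ S_X if and only if the norm of Y is differentiable at τ(x). -/
/-!
Let `u` be a unit vector. The norm is differentiable at `u` exactly when `2 - ‖y + z‖` is of smaller
order than `‖y - u‖ + ‖z - u‖` as the unit vectors `y`, `z` tend to `u`. Since `‖y + z‖` is the
distance from `y` to the antipode of `z`, this condition is preserved by isometries of spheres that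
commute with the antipodal map.

In a plane every surjective isometry `τ` does: `ρ x = τ⁻¹ (-τ x)` is an isometric involution with
`‖x - ρ x‖ = 2`, so for `σ = -ρ` any two of `x`, `σ x`, `σ (σ x)` have a sum of norm `2`, and the
three points lie on a common line. Either `σ` swaps `x` and `σ x`, and then a connectedness argument
shows that `z + σ z` is the same vector for all `z`, which fails at `z = -x`; or `x`, `σ x`,
`σ (σ x)` are in arithmetic progression, and boundedness of the orbit of `x` forces `σ x = x`.
-/

open Asymptotics Filter Metric NormedSpace Topology

section NormInequalities

variable {E : Type*} [NormedAddCommGroup E] [NormedSpace ℝ E]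

lemma apply_le_norm_of_norm_le_one {f : StrongDual ℝ E} (hf : ‖f‖ ≤ 1) (x : E) : f x ≤ ‖x‖ :=
  (le_abs_self _).trans (by simpa using f.le_of_opNorm_le hf x)

lemma norm_normalize_le_one (x : E) : ‖normalize x‖ ≤ 1 := by
  rcases eq_or_ne x 0 with rfl | hx
  · simp
  · exact (norm_normalize hx).le

lemma norm_normalize_sub_le {u : E} (hu : ‖u‖ = 1) (x : E) : ‖normalize x - u‖ ≤ 2 * ‖x - u‖ := by
  have hnormalize : ‖normalize x - x‖ ≤ ‖x - u‖ := by
    rcases eq_or_ne x 0 with rfl | hx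
    · simp
    have hsmul : normalize x - x = (1 - ‖x‖) • normalize x := by
      rw [sub_smul, one_smul, norm_smul_normalize]
    rw [hsmul, norm_smul, norm_normalize hx, mul_one, Real.norm_eq_abs, ← hu, norm_sub_rev x]
    exact abs_norm_sub_norm_le u x
  linarith [norm_sub_le_norm_sub_add_norm_sub (normalize x) x u]

lemma norm_add_norm_sub_norm_add_le (x y : E) :
    ‖x‖ + ‖y‖ - ‖x + y‖ ≤ max ‖x‖ ‖y‖ * (2 - ‖normalize x + normalize y‖) := by
  wlog hxy : ‖x‖ ≤ ‖y‖ generalizing x y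
  · simpa only [add_comm, max_comm] using this y x (le_of_not_ge hxy)
  have hsmul : ‖y‖ • (normalize x + normalize y) = (x + y) + (‖y‖ - ‖x‖) • normalize x := by
    rw [smul_add, sub_smul, norm_smul_normalize, norm_smul_normalize]
    abel
  have hle : ‖y‖ * ‖normalize x + normalize y‖ ≤ ‖x + y‖ + (‖y‖ - ‖x‖) := by
    calc ‖y‖ * ‖normalize x + normalize y‖
        = ‖(x + y) + (‖y‖ - ‖x‖) • normalize x‖ := by rw [← hsmul, norm_smul, norm_norm]
      _ ≤ ‖x + y‖ + (‖y‖ - ‖x‖) * ‖normalize x‖ := by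
        refine (norm_add_le _ _).trans_eq ?_
        rw [norm_smul, Real.norm_of_nonneg (sub_nonneg.2 hxy)]
      _ ≤ ‖x + y‖ + (‖y‖ - ‖x‖) := by
        gcongr
        exact mul_le_of_le_one_right (sub_nonneg.2 hxy) (norm_normalize_le_one x)
  rw [max_eq_right hxy]
  linarith

lemma differentiableAt_norm_of_isLittleO {u : E}
    (h : (fun v ↦ ‖u + v‖ + ‖u - v‖ - 2 * ‖u‖) =o[𝓝 0] fun v : E ↦ ‖v‖) :
    DifferentiableAt ℝ (fun z : E ↦ ‖z‖) u := by
  obtain ⟨f, hf, hfu⟩ := exists_dual_vector'' ℝ u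
  have hfu : f u = ‖u‖ := hfu
  refine HasFDerivAt.differentiableAt (f' := f) (hasFDerivAt_iff_isLittleO_nhds_zero.2 ?_)
  refine (IsBigO.of_norm_le fun v ↦ ?_).trans_isLittleO h.of_norm_right
  have hplus := apply_le_norm_of_norm_le_one hf (u + v)
  have hminus := apply_le_norm_of_norm_le_one hf (u - v)
  rw [map_add, hfu] at hplus
  rw [map_sub, hfu] at hminus
  rw [Real.norm_of_nonneg (by linarith)]
  linarith

end NormInequalities

section MetricSmoothness

/-- The metric form of differentiability of the norm at a unit vector `u`: to first order, points
near `u` are at the maximal distance `2` from the antipodes of points near `u`. Only distances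
within the sphere and the antipodal map occur, which makes the notion transferable along
isometries of spheres. -/
def MetricSmoothAt {E : Type*} [NormedAddCommGroup E] (u : sphere (0 : E) 1) : Prop :=
  (fun p : sphere (0 : E) 1 × sphere (0 : E) 1 ↦ 2 - dist p.1 (-p.2)) =o[𝓝 (u, u)]
    fun p ↦ dist p.1 u + dist p.2 u

lemma dist_neg_right_sphere {E : Type*} [NormedAddCommGroup E] {r : ℝ} (x y : sphere (0 : E) r) :
    dist x (-y) = ‖(x : E) + y‖ := by
  rw [Subtype.dist_eq, dist_eq_norm, coe_neg_sphere, sub_neg_eq_add]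

lemma dist_neg_neg_sphere {E : Type*} [NormedAddCommGroup E] {r : ℝ} (x y : sphere (0 : E) r) :
    dist (-x) (-y) = dist x y := by
  rw [Subtype.dist_eq, coe_neg_sphere, coe_neg_sphere, dist_neg_neg, Subtype.dist_eq]

lemma isLittleO_nhdsWithin_of_metricSmoothAt {E : Type*} [NormedAddCommGroup E]
    {u : sphere (0 : E) 1} (h : MetricSmoothAt u) :
    (fun p : E × E ↦ 2 - ‖p.1 + p.2‖) =o[𝓝[sphere 0 1] (u : E) ×ˢ 𝓝[sphere 0 1] (u : E)]
      fun p ↦ ‖p.1 - (u : E)‖ + ‖p.2 - (u : E)‖ := by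
  rw [nhdsWithin_eq_map_subtype_coe u.2, prod_map_map_eq, isLittleO_map, ← nhds_prod_eq]
  simp only [MetricSmoothAt, dist_neg_right_sphere] at h
  simpa only [Function.comp_def, Subtype.dist_eq, dist_eq_norm] using h

lemma metricSmoothAt_map_iff {X Y : Type*} [NormedAddCommGroup X] [NormedAddCommGroup Y]
    (τ : sphere (0 : X) 1 ≃ᵢ sphere (0 : Y) 1) (hneg : ∀ x, τ (-x) = -τ x) (u : sphere (0 : X) 1) :
    MetricSmoothAt (τ u) ↔ MetricSmoothAt u := by
  have hmap : 𝓝 (τ u, τ u) = map (Prod.map τ τ) (𝓝 (u, u)) := by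
    rw [nhds_prod_eq, nhds_prod_eq, ← prod_map_map_eq']
    congr <;> exact (τ.toHomeomorph.map_nhds_eq u).symm
  simp only [MetricSmoothAt, hmap, isLittleO_map, Function.comp_def, Prod.map, ← hneg, τ.dist_eq]

variable {E : Type*} [NormedAddCommGroup E] [NormedSpace ℝ E]

lemma dist_self_neg_sphere (x : sphere (0 : E) 1) : dist x (-x) = 2 := by
  rw [dist_neg_right_sphere, ← two_smul ℝ, norm_smul, norm_eq_of_mem_sphere, Real.norm_two, mul_one]

lemma metricSmoothAt_of_differentiableAt_norm {u : sphere (0 : E) 1}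
    (h : DifferentiableAt ℝ (fun z : E ↦ ‖z‖) u) : MetricSmoothAt u := by
  set f := fderiv ℝ (fun z : E ↦ ‖z‖) u
  have hfu : f u = 1 := by rw [h.fderiv_norm_self, norm_eq_of_mem_sphere]
  have hf : ‖f‖ ≤ 1 := by
    simpa using norm_fderiv_le_of_lipschitz ℝ (lipschitzWith_one_norm (E := E)) (x₀ := (u : E))
  have hsub : (fun y : sphere (0 : E) 1 ↦ 1 - f y) =o[𝓝 u] fun y ↦ dist y u := by
    have hlittle := h.hasFDerivAt.isLittleO.comp_tendsto (continuous_subtype_val.tendsto u)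
    refine hlittle.norm_right.congr (fun y ↦ ?_) fun y ↦ ?_
    · change ‖(y : E)‖ - ‖(u : E)‖ - f (y - u) = 1 - f y
      rw [map_sub, hfu, norm_eq_of_mem_sphere, norm_eq_of_mem_sphere]
      ring
    · exact (dist_eq_norm (y : E) u).symm
  have hpair := (hsub.comp_tendsto (tendsto_fst (f := 𝓝 u) (g := 𝓝 u))).add_add
    (hsub.comp_tendsto tendsto_snd)
  simp only [Function.comp_def, Real.norm_of_nonneg dist_nonneg] at hpair
  rw [MetricSmoothAt, nhds_prod_eq]
  refine (IsBigO.of_norm_le fun ⟨y, z⟩ ↦ ?_).trans_isLittleO hpair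
  have hle : ‖(y : E) + z‖ ≤ 1 + 1 := by simpa using norm_add_le (y : E) z
  have hfyz := apply_le_norm_of_norm_le_one hf ((y : E) + z)
  rw [map_add] at hfyz
  rw [dist_neg_right_sphere, Real.norm_of_nonneg (by linarith)]
  linarith

lemma tendsto_normalize_nhdsWithin_sphere {u : E} (hu : ‖u‖ = 1) :
    Tendsto (fun x : E ↦ normalize x) (𝓝 u) (𝓝[sphere 0 1] u) := by
  have hu0 : u ≠ 0 := norm_ne_zero_iff.1 (hu ▸ one_ne_zero)
  refine tendsto_nhdsWithin_iff.2 ⟨tendsto_iff_norm_sub_tendsto_zero.2 ?_, ?_⟩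
  · refine squeeze_zero (fun x ↦ norm_nonneg _) (norm_normalize_sub_le hu) ?_
    exact Continuous.tendsto' (by fun_prop) _ _ (by simp)
  · filter_upwards [eventually_ne_nhds hu0] with x hx
    simpa using hx

lemma differentiableAt_norm_of_metricSmoothAt {u : sphere (0 : E) 1} (h : MetricSmoothAt u) :
    DifferentiableAt ℝ (fun z : E ↦ ‖z‖) u := by
  have hu : ‖(u : E)‖ = 1 := norm_eq_of_mem_sphere u
  have hplus : Tendsto (fun v ↦ (u : E) + v) (𝓝 0) (𝓝 u) :=
    Continuous.tendsto' (by fun_prop) _ _ (add_zero _)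
  have hminus : Tendsto (fun v ↦ (u : E) - v) (𝓝 0) (𝓝 u) :=
    Continuous.tendsto' (by fun_prop) _ _ (sub_zero _)
  have hnormalize := tendsto_normalize_nhdsWithin_sphere hu
  have hdefect : (fun v ↦ 2 - ‖normalize ((u : E) + v) + normalize ((u : E) - v)‖) =o[𝓝 0]
      fun v : E ↦ ‖v‖ := by
    refine ((isLittleO_nhdsWithin_of_metricSmoothAt h).comp_tendsto
      ((hnormalize.comp hplus).prodMk (hnormalize.comp hminus))).trans_isBigO ?_
    refine .of_bound 4 (.of_forall fun v ↦ ?_)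
    have hadd := norm_normalize_sub_le hu (u + v)
    have hsub := norm_normalize_sub_le hu (u - v)
    rw [add_sub_cancel_left] at hadd
    rw [sub_sub_cancel_left, norm_neg] at hsub
    simp only [Function.comp_apply, norm_norm]
    rw [Real.norm_of_nonneg (by positivity)]
    linarith
  have hmax : (fun v ↦ max ‖(u : E) + v‖ ‖(u : E) - v‖) =O[𝓝 0] fun _ ↦ (1 : ℝ) :=
    (hplus.norm.max hminus.norm).isBigO_one ℝ
  refine differentiableAt_norm_of_isLittleO
    ((IsBigO.of_norm_le fun v ↦ ?_).trans_isLittleO (by simpa using hmax.mul_isLittleO hdefect))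
  have htwo : ‖(u + v : E) + (u - v)‖ = 2 := by
    rw [add_add_sub_cancel, ← two_smul ℝ, norm_smul, hu, Real.norm_two, mul_one]
  have hnonneg : 2 ≤ ‖(u : E) + v‖ + ‖(u : E) - v‖ := htwo ▸ norm_add_le _ _
  have hle := norm_add_norm_sub_norm_add_le ((u : E) + v) (u - v)
  rw [htwo] at hle
  rwa [hu, mul_one, Real.norm_of_nonneg (by linarith)]

lemma differentiableAt_norm_iff_metricSmoothAt (u : sphere (0 : E) 1) :
    DifferentiableAt ℝ (fun z : E ↦ ‖z‖) u ↔ MetricSmoothAt u :=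
  ⟨metricSmoothAt_of_differentiableAt_norm, differentiableAt_norm_of_metricSmoothAt⟩

end MetricSmoothness

section Segments

variable {E : Type*} [NormedAddCommGroup E] [NormedSpace ℝ E]

lemma exists_dual_of_norm_add {x y : E} (h : ‖x + y‖ = ‖x‖ + ‖y‖) :
    ∃ f : StrongDual ℝ E, ‖f‖ ≤ 1 ∧ f x = ‖x‖ ∧ f y = ‖y‖ := by
  obtain ⟨f, hf, hfxy⟩ := exists_dual_vector'' ℝ (x + y)
  have hfxy : f x + f y = ‖x‖ + ‖y‖ := by rw [← map_add, ← h]; exact hfxy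
  have hx := apply_le_norm_of_norm_le_one hf x
  have hy := apply_le_norm_of_norm_le_one hf y
  exact ⟨f, hf, by linarith, by linarith⟩

lemma norm_smul_add_smul_of_norm_add {x y : E} (h : ‖x + y‖ = ‖x‖ + ‖y‖) {s t : ℝ}
    (hs : 0 ≤ s) (ht : 0 ≤ t) : ‖s • x + t • y‖ = s * ‖x‖ + t * ‖y‖ := by
  obtain ⟨f, hf, hfx, hfy⟩ := exists_dual_of_norm_add h
  refine le_antisymm ?_ ?_
  · simpa [norm_smul, abs_of_nonneg hs, abs_of_nonneg ht] using norm_add_le (s • x) (t • y)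
  · simpa [hfx, hfy] using apply_le_norm_of_norm_le_one hf (s • x + t • y)

lemma linearIndependent_of_norm_add {x y : E} (h : ‖x + y‖ = ‖x‖ + ‖y‖) (hnorm : ‖x‖ = ‖y‖)
    (hne : x ≠ y) : LinearIndependent ℝ ![x, y] := by
  obtain ⟨f, -, hfx, hfy⟩ := exists_dual_of_norm_add h
  have hy : ‖y‖ ≠ 0 := fun hy ↦ hne <| by
    rw [norm_eq_zero.1 hy, norm_eq_zero.1 (hnorm.trans hy)]
  refine LinearIndependent.pair_iff.2 fun s t hst ↦ ?_
  have hsum : (s + t) * ‖y‖ = 0 := by simpa [hfx, hfy, hnorm, add_mul] using congrArg f hst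
  obtain rfl : s = -t := eq_neg_of_add_eq_zero_left ((mul_eq_zero.1 hsum).resolve_right hy)
  have hsmul : t • (y - x) = 0 := by rw [← hst]; module
  have ht : t = 0 := (smul_eq_zero.1 hsmul).resolve_right (sub_ne_zero.2 hne.symm)
  simp [ht]

lemma add_eq_add_of_dist_eq {a b x y : E} (hab : a ≠ b) {s t : ℝ}
    (hx : AffineMap.lineMap a b s = x) (hy : AffineMap.lineMap a b t = y)
    (hxa : dist y b = dist x a) (hxb : dist y a = dist x b) : x + y = a + b := by
  subst hx hy
  have hd : dist a b ≠ 0 := dist_ne_zero.2 hab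
  rw [dist_lineMap_right, dist_lineMap_left] at hxa hxb
  have hts : (1 - t) ^ 2 = s ^ 2 := sq_eq_sq_iff_abs_eq_abs _ _ |>.2 (mul_right_cancel₀ hd hxa)
  have hst : t ^ 2 = (1 - s) ^ 2 := sq_eq_sq_iff_abs_eq_abs _ _ |>.2 (mul_right_cancel₀ hd hxb)
  obtain rfl : t = 1 - s := by linarith
  simp only [AffineMap.lineMap_apply_module]
  module

lemma add_eq_one_of_pairwise_norm_add_eq_two {a b : E} {s t : ℝ} (ha : ‖a‖ = 1) (hb : ‖b‖ = 1)
    (hc : ‖s • a + t • b‖ = 1) (hab : ‖a + b‖ = 2) (hca : ‖s • a + t • b + a‖ = 2)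
    (hcb : ‖s • a + t • b + b‖ = 2) : s + t = 1 := by
  have hab' : ‖a + b‖ = ‖a‖ + ‖b‖ := by linarith
  have hca' : ‖s • a + t • b + a‖ = ‖s • a + t • b‖ + ‖a‖ := by linarith
  have hcb' : ‖s • a + t • b + b‖ = ‖s • a + t • b‖ + ‖b‖ := by linarith
  rcases le_or_gt 0 s with hs | hs <;> rcases le_or_gt 0 t with ht | ht
  · simpa [hc, ha, hb] using (norm_smul_add_smul_of_norm_add hab' hs ht).symm
  · have h := norm_smul_add_smul_of_norm_add hcb' zero_le_one (neg_nonneg.2 ht.le)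
    rw [show (1 : ℝ) • (s • a + t • b) + (-t) • b = s • a by module, norm_smul, ha, hb, hc,
      Real.norm_of_nonneg hs] at h
    linarith
  · have h := norm_smul_add_smul_of_norm_add hca' zero_le_one (neg_nonneg.2 hs.le)
    rw [show (1 : ℝ) • (s • a + t • b) + (-s) • a = t • b by module, norm_smul, ha, hb, hc,
      Real.norm_of_nonneg ht] at h
    linarith
  · have h := norm_smul_add_smul_of_norm_add hab' (neg_nonneg.2 hs.le) (neg_nonneg.2 ht.le)
    rw [show (-s) • a + (-t) • b = -(s • a + t • b) by module, norm_neg, hc, ha, hb] at h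
    obtain rfl : t = -1 - s := by linarith
    have hle : ‖a - b‖ ≤ 2 := (norm_sub_le a b).trans (by linarith)
    rw [show s • a + (-1 - s) • b + a = (1 + s) • (a - b) by module, norm_smul,
      Real.norm_of_nonneg (by linarith)] at hca
    nlinarith

end Segments

section Plane

section LinearAlgebra

variable {K V : Type*} [Field K] [AddCommGroup V] [Module K V]

lemma exists_smul_add_smul_eq (hdim : Module.finrank K V = 2) {a b : V}
    (h : LinearIndependent K ![a, b]) (x : V) : ∃ s t : K, s • a + t • b = x := by
  have : FiniteDimensional K V := .of_finrank_eq_succ hdim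
  have hspan := h.span_eq_top_of_card_eq_finrank' (by simp [hdim])
  rw [Matrix.range_cons_cons_empty] at hspan
  exact Submodule.mem_span_pair.1 (hspan ▸ Submodule.mem_top)

lemma exists_lineMap_eq_of_apply_eq (hdim : Module.finrank K V = 2) {a b x : V}
    (h : LinearIndependent K ![a, b]) {f : V →ₗ[K] K} (ha : f a ≠ 0) (hb : f b = f a)
    (hx : f x = f a) : ∃ s : K, AffineMap.lineMap a b s = x := by
  obtain ⟨s, t, rfl⟩ := exists_smul_add_smul_eq hdim h x
  have hst : (s + t) * f a = 1 * f a := by simpa [hb, add_mul] using hx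
  obtain rfl : s = 1 - t := eq_sub_of_add_eq (mul_right_cancel₀ ha hst)
  exact ⟨t, AffineMap.lineMap_apply_module a b t⟩

end LinearAlgebra

variable {E : Type*} [NormedAddCommGroup E] [NormedSpace ℝ E]

lemma eventually_exists_pos_smul_add_smul_eq (hdim : Module.finrank ℝ E = 2) {a b : E}
    (h : LinearIndependent ℝ ![a, b]) :
    ∀ᶠ x in 𝓝 (a + b), ∃ s > (0 : ℝ), ∃ t > (0 : ℝ), s • a + t • b = x := by
  have : FiniteDimensional ℝ E := .of_finrank_eq_succ hdim
  let B := basisOfLinearIndependentOfCardEqFinrank h (by simp [hdim])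
  have hB0 : B 0 = a := by simp [B]
  have hB1 : B 1 = b := by simp [B]
  have hpos (i : Fin 2) : ∀ᶠ x in 𝓝 (a + b), 0 < B.coord i x := by
    refine (B.coord i).continuous_of_finiteDimensional.continuousAt.eventually (lt_mem_nhds ?_)
    fin_cases i <;> simp [← hB0, ← hB1]
  filter_upwards [hpos 0, hpos 1] with x hs ht
  refine ⟨B.coord 0 x, hs, B.coord 1 x, ht, ?_⟩
  simpa only [Fin.sum_univ_two, hB0, hB1, Module.Basis.coord_apply] using B.sum_repr x

lemma exists_lineMap_eq_of_pairwise_norm_add_eq_two (hdim : Module.finrank ℝ E = 2) {a b c : E}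
    (ha : ‖a‖ = 1) (hb : ‖b‖ = 1) (hc : ‖c‖ = 1) (hne : a ≠ b) (hab : ‖a + b‖ = 2)
    (hca : ‖c + a‖ = 2) (hcb : ‖c + b‖ = 2) : ∃ s : ℝ, AffineMap.lineMap a b s = c := by
  have hlin := linearIndependent_of_norm_add (by linarith) (ha.trans hb.symm) hne
  obtain ⟨s, t, rfl⟩ := exists_smul_add_smul_eq hdim hlin c
  obtain rfl : s = 1 - t :=
    eq_sub_of_add_eq (add_eq_one_of_pairwise_norm_add_eq_two ha hb hc hab hca hcb)
  exact ⟨t, AffineMap.lineMap_apply_module a b t⟩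

lemma eventually_exists_lineMap_eq (hdim : Module.finrank ℝ E = 2) {a b : E} (ha : ‖a‖ = 1)
    (hb : ‖b‖ = 1) (hne : a ≠ b) (hab : ‖a + b‖ = 2) :
    ∀ᶠ w in 𝓝 (a + b), ∀ x y : E, ‖x‖ = 1 → ‖y‖ = 1 → ‖x + y‖ = 2 → x + y = w →
      (∃ s : ℝ, AffineMap.lineMap a b s = x) ∧ ∃ t : ℝ, AffineMap.lineMap a b t = y := by
  have hadd : ‖a + b‖ = ‖a‖ + ‖b‖ := by linarith
  have hlin := linearIndependent_of_norm_add hadd (ha.trans hb.symm) hne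
  obtain ⟨f, hf, hfa, hfb⟩ := exists_dual_of_norm_add hadd
  rw [ha] at hfa
  rw [hb] at hfb
  filter_upwards [eventually_exists_pos_smul_add_smul_eq hdim hlin]
  rintro _ ⟨s, hs, t, ht, rfl⟩ x y hx hy hxy hsum
  have hst : s + t = 2 := by
    simpa [← hsum, hxy, ha, hb] using (norm_smul_add_smul_of_norm_add hadd hs.le ht.le).symm
  have hfxy : f x + f y = 2 := by rw [← map_add, hsum]; simp [hfa, hfb, hst]
  have hfx := apply_le_norm_of_norm_le_one hf x
  have hfy := apply_le_norm_of_norm_le_one hf y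
  have hline (z : E) (hz : f z = 1) : ∃ s : ℝ, AffineMap.lineMap a b s = z :=
    exists_lineMap_eq_of_apply_eq hdim hlin (f := f.toLinearMap) (by simp [hfa])
      (hfb.trans hfa.symm) (hz.trans hfa.symm)
  exact ⟨hline x (by linarith), hline y (by linarith)⟩

end Plane

section SphereIsometries

variable {E : Type*} [NormedAddCommGroup E] [NormedSpace ℝ E]

lemma sphere_isometry_eventually_add_map_eq_of_swap (hdim : Module.finrank ℝ E = 2)
    {σ : sphere (0 : E) 1 → sphere (0 : E) 1} (hσ : Isometry σ)
    (hadd : ∀ x : sphere (0 : E) 1, ‖(x : E) + σ x‖ = 2) {a b : sphere (0 : E) 1} (hne : a ≠ b)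
    (hσa : σ a = b) (hσb : σ b = a) {y : sphere (0 : E) 1} (hy : (y : E) + σ y = a + b) :
    ∀ᶠ z : sphere (0 : E) 1 in 𝓝 y, (z : E) + σ z = a + b := by
  have hcont : Tendsto (fun z : sphere (0 : E) 1 ↦ (z : E) + σ z) (𝓝 y) (𝓝 ((a : E) + b)) :=
    Continuous.tendsto' (continuous_subtype_val.add (continuous_subtype_val.comp hσ.continuous))
      _ _ hy
  have hne' : (a : E) ≠ b := Subtype.coe_ne_coe.2 hne
  filter_upwards [hcont.eventually (eventually_exists_lineMap_eq hdim (norm_eq_of_mem_sphere a)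
    (norm_eq_of_mem_sphere b) hne' (hσa ▸ hadd a))] with z hz
  obtain ⟨⟨s, hs⟩, t, ht⟩ :=
    hz z (σ z) (norm_eq_of_mem_sphere z) (norm_eq_of_mem_sphere (σ z)) (hadd z) rfl
  refine add_eq_add_of_dist_eq hne' hs ht ?_ ?_
  · exact hσa ▸ hσ.dist_eq z a
  · exact hσb ▸ hσ.dist_eq z b

lemma sphere_isometry_eq_of_swap (hdim : Module.finrank ℝ E = 2)
    {σ : sphere (0 : E) 1 → sphere (0 : E) 1} (hσ : Isometry σ)
    (hadd : ∀ x : sphere (0 : E) 1, ‖(x : E) + σ x‖ = 2)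
    {a b : sphere (0 : E) 1} (hσa : σ a = b) (hσb : σ b = a) : a = b := by
  by_contra hne
  have hrank : 1 < Module.rank ℝ E := Module.one_lt_rank_of_one_lt_finrank (by omega)
  have : PreconnectedSpace (sphere (0 : E) 1) :=
    isPreconnected_iff_preconnectedSpace.1 (isPreconnected_sphere hrank 0 1)
  have hcont : Continuous fun z : sphere (0 : E) 1 ↦ (z : E) + σ z :=
    continuous_subtype_val.add (continuous_subtype_val.comp hσ.continuous)
  have hclopen : IsClopen {z : sphere (0 : E) 1 | (z : E) + σ z = a + b} :=
    ⟨isClosed_eq hcont continuous_const, isOpen_iff_eventually.2 fun _ hy ↦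
      sphere_isometry_eventually_add_map_eq_of_swap hdim hσ hadd hne hσa hσb hy⟩
  have hconst (z : sphere (0 : E) 1) : (z : E) + σ z = a + b :=
    Set.eq_univ_iff_forall.1 (hclopen.eq_univ ⟨a, by simp [hσa]⟩) z
  have hnorm : ‖(a : E) + b‖ = ‖(a : E)‖ + ‖(b : E)‖ := by
    rw [← hσa, hadd a, norm_eq_of_mem_sphere, norm_eq_of_mem_sphere]
    norm_num
  have hthree : ‖(2 : ℝ) • (a : E) + (1 : ℝ) • (b : E)‖ = 3 := by
    rw [norm_smul_add_smul_of_norm_add hnorm zero_le_two zero_le_one, norm_eq_of_mem_sphere,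
      norm_eq_of_mem_sphere]
    norm_num
  have hmap : (σ (-a) : E) = (2 : ℝ) • (a : E) + (1 : ℝ) • (b : E) := by
    rw [eq_sub_of_add_eq' (hconst (-a)), coe_neg_sphere]
    module
  rw [← hmap, norm_eq_of_mem_sphere] at hthree
  norm_num at hthree

lemma sphere_isometry_map_map_sub_map_eq (hdim : Module.finrank ℝ E = 2)
    {σ : sphere (0 : E) 1 → sphere (0 : E) 1} (hσ : Isometry σ)
    (hadd : ∀ x : sphere (0 : E) 1, ‖(x : E) + σ x‖ = 2)
    (hadd₂ : ∀ x : sphere (0 : E) 1, ‖(x : E) + σ (σ x)‖ = 2)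
    (x : sphere (0 : E) 1) : (σ (σ x) : E) - σ x = σ x - x := by
  rcases eq_or_ne x (σ x) with hx | hne
  · rw [← hx, ← hx]
  have hne' : (x : E) ≠ σ x := Subtype.coe_ne_coe.2 hne
  obtain ⟨s, hs⟩ := exists_lineMap_eq_of_pairwise_norm_add_eq_two hdim (norm_eq_of_mem_sphere x)
    (norm_eq_of_mem_sphere (σ x)) (norm_eq_of_mem_sphere (σ (σ x))) hne' (hadd x)
    (by rw [add_comm, hadd₂]) (by rw [add_comm, hadd])
  have hdist : |1 - s| = 1 := by
    have h : dist (σ (σ x) : E) (σ x) = dist (x : E) (σ x) :=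
      (hσ.dist_eq (σ x) x).trans (dist_comm _ _)
    rw [← hs, dist_lineMap_right] at h
    exact mul_right_cancel₀ (dist_ne_zero.2 hne') (h.trans (one_mul _).symm)
  rcases eq_or_eq_neg_of_abs_eq hdist with h | h
  · obtain rfl : s = 0 := by linarith
    rw [AffineMap.lineMap_apply_zero] at hs
    exact absurd (sphere_isometry_eq_of_swap hdim hσ hadd rfl (Subtype.ext hs.symm)) hne
  · obtain rfl : s = 2 := by linarith
    rw [← hs, AffineMap.lineMap_apply_module]
    module

lemma eq_of_bounded_of_sub_eq {u : ℕ → E} {C : ℝ} (hbound : ∀ n, ‖u n‖ ≤ C)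
    (hsub : ∀ n, u (n + 2) - u (n + 1) = u (n + 1) - u n) : u 1 = u 0 := by
  have hdiff (n : ℕ) : u (n + 1) - u n = u 1 - u 0 := by
    induction n with
    | zero => rfl
    | succ n ih => rw [hsub, ih]
  have hlinear (n : ℕ) : (n : ℝ) • (u 1 - u 0) = u n - u 0 := by
    have htelescope := Finset.sum_range_sub u n
    rwa [Finset.sum_congr rfl fun i _ ↦ hdiff i, Finset.sum_const, Finset.card_range,
      ← Nat.cast_smul_eq_nsmul ℝ] at htelescope
  by_contra hne
  have hpos : 0 < ‖u 1 - u 0‖ := norm_pos_iff.2 (sub_ne_zero.2 hne)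
  obtain ⟨n, hn⟩ := exists_nat_gt ((C + C) / ‖u 1 - u 0‖)
  rw [div_lt_iff₀ hpos, ← Real.norm_natCast, ← norm_smul, hlinear] at hn
  linarith [norm_sub_le (u n) (u 0), hbound n, hbound 0]

theorem sphere_isometry_eq_self (hdim : Module.finrank ℝ E = 2)
    {σ : sphere (0 : E) 1 → sphere (0 : E) 1} (hσ : Isometry σ)
    (hadd : ∀ x : sphere (0 : E) 1, ‖(x : E) + σ x‖ = 2)
    (hadd₂ : ∀ x : sphere (0 : E) 1, ‖(x : E) + σ (σ x)‖ = 2)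
    (x : sphere (0 : E) 1) : σ x = x := by
  refine Subtype.ext (eq_of_bounded_of_sub_eq (u := fun n ↦ (σ^[n] x : E)) (C := 1)
    (fun n ↦ (norm_eq_of_mem_sphere _).le) fun n ↦ ?_)
  simpa only [Function.iterate_succ_apply'] using
    sphere_isometry_map_map_sub_map_eq hdim hσ hadd hadd₂ (σ^[n] x)

theorem sphere_isometry_eq_neg_of_involutive (hdim : Module.finrank ℝ E = 2)
    {ρ : sphere (0 : E) 1 → sphere (0 : E) 1} (hρ : Isometry ρ) (hinv : Function.Involutive ρ)
    (hfar : ∀ x, dist x (ρ x) = 2) (x : sphere (0 : E) 1) : ρ x = -x := by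
  have hσ : Isometry fun y ↦ -ρ y :=
    .of_dist_eq fun y z ↦ by rw [dist_neg_neg_sphere, hρ.dist_eq]
  refine neg_eq_iff_eq_neg.1 (sphere_isometry_eq_self hdim hσ (fun y ↦ ?_) (fun y ↦ ?_) x)
  · rw [← dist_neg_right_sphere, neg_neg, hfar]
  · calc ‖(y : E) + (-ρ (-ρ y) : sphere (0 : E) 1)‖ = dist y (ρ (-ρ y)) := by
          rw [← dist_neg_right_sphere, neg_neg]
      _ = dist (ρ y) (-ρ y) := by rw [← hρ.dist_eq, hinv]
      _ = 2 := dist_self_neg_sphere _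

theorem sphere_isometryEquiv_map_neg {X Y : Type*} [NormedAddCommGroup X] [NormedSpace ℝ X]
    [NormedAddCommGroup Y] [NormedSpace ℝ Y] (hdim : Module.finrank ℝ X = 2)
    (τ : sphere (0 : X) 1 ≃ᵢ sphere (0 : Y) 1) (x : sphere (0 : X) 1) : τ (-x) = -τ x := by
  have hρ : Isometry fun y ↦ τ.symm (-τ y) :=
    .of_dist_eq fun y z ↦ by rw [τ.symm.dist_eq, dist_neg_neg_sphere, τ.dist_eq]
  have hfar (y : sphere (0 : X) 1) : dist y (τ.symm (-τ y)) = 2 := by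
    rw [← τ.dist_eq, τ.apply_symm_apply, dist_self_neg_sphere]
  rw [← sphere_isometry_eq_neg_of_involutive hdim hρ (fun y ↦ by simp) hfar x,
    τ.apply_symm_apply]

lemma exists_isometryEquiv_sphere {X Y : Type*} [NormedAddCommGroup X] [NormedAddCommGroup Y]
    {τ : X → Y} {r : ℝ} (hmap : ∀ u : X, ‖u‖ = r → ‖τ u‖ = r)
    (hsurj : ∀ w : Y, ‖w‖ = r → ∃ u : X, ‖u‖ = r ∧ τ u = w)
    (hiso : ∀ u v : X, ‖u‖ = r → ‖v‖ = r → ‖τ u - τ v‖ = ‖u - v‖) :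
    ∃ T : sphere (0 : X) r ≃ᵢ sphere (0 : Y) r, ∀ u, (T u : Y) = τ u := by
  let T (u : sphere (0 : X) r) : sphere (0 : Y) r :=
    ⟨τ u, mem_sphere_zero_iff_norm.2 (hmap u (norm_eq_of_mem_sphere u))⟩
  have hT : Isometry T := .of_dist_eq fun u v ↦ by
    simpa only [Subtype.dist_eq, dist_eq_norm] using
      hiso u v (norm_eq_of_mem_sphere u) (norm_eq_of_mem_sphere v)
  have hTsurj : Function.Surjective T := fun w ↦ by
    obtain ⟨u, hu, huw⟩ := hsurj w (norm_eq_of_mem_sphere w)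
    exact ⟨⟨u, mem_sphere_zero_iff_norm.2 hu⟩, Subtype.ext huw⟩
  exact ⟨⟨.ofBijective T ⟨hT.injective, hTsurj⟩, hT⟩, fun _ ↦ rfl⟩

end SphereIsometries

theorem stmt3_general {X Y : Type*} [NormedAddCommGroup X] [NormedSpace ℝ X]
    [NormedAddCommGroup Y] [NormedSpace ℝ Y] (hdimX : Module.finrank ℝ X = 2) (τ : X → Y)
    (hmap : ∀ u : X, ‖u‖ = 1 → ‖τ u‖ = 1)
    (hsurj : ∀ w : Y, ‖w‖ = 1 → ∃ u : X, ‖u‖ = 1 ∧ τ u = w)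
    (hiso : ∀ u v : X, ‖u‖ = 1 → ‖v‖ = 1 → ‖τ u - τ v‖ = ‖u - v‖) :
    τ '' {u : X | ‖u‖ = 1 ∧ ¬ DifferentiableAt ℝ (fun z : X ↦ ‖z‖) u} =
        {w : Y | ‖w‖ = 1 ∧ ¬ DifferentiableAt ℝ (fun z : Y ↦ ‖z‖) w} ∧
      ∀ u : X, ‖u‖ = 1 →
        (DifferentiableAt ℝ (fun z : X ↦ ‖z‖) u ↔
         DifferentiableAt ℝ (fun z : Y ↦ ‖z‖) (τ u)) := by
  obtain ⟨T, hT⟩ := exists_isometryEquiv_sphere hmap hsurj hiso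
  have hiff (u : X) (hu : ‖u‖ = 1) : DifferentiableAt ℝ (fun z : X ↦ ‖z‖) u ↔
      DifferentiableAt ℝ (fun z : Y ↦ ‖z‖) (τ u) := by
    lift u to sphere (0 : X) 1 using mem_sphere_zero_iff_norm.2 hu
    rw [← hT, differentiableAt_norm_iff_metricSmoothAt, differentiableAt_norm_iff_metricSmoothAt,
      metricSmoothAt_map_iff T (sphere_isometryEquiv_map_neg hdimX T)]
  refine ⟨Set.Subset.antisymm ?_ ?_, hiff⟩
  · rintro _ ⟨u, ⟨hu, hndiff⟩, rfl⟩
    exact ⟨hmap u hu, (hiff u hu).not.1 hndiff⟩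
  · rintro w ⟨hw, hndiff⟩
    obtain ⟨u, hu, rfl⟩ := hsurj w hw
    exact ⟨u, ⟨hu, (hiff u hu).not.2 hndiff⟩, rfl⟩

/-- Corollary: transfer of piecewise `C¹`-differentiability.
Let `X`, `Y` be two-dimensional real normed spaces and `τ : S_X → S_Y` a surjective
isometry between their unit spheres. If the norm of `X` is piecewise `C¹` on `S_X`
(i.e. its set of non-differentiability points on the unit sphere is finite), then so
is the norm of `Y`; moreover the norm of `X` is differentiable at a point `x` of the
unit sphere iff the norm of `Y` is differentiable at `τ x`. -/
theorem stmt3 {X Y : Type*} [NormedAddCommGroup X] [NormedSpace ℝ X]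
    [NormedAddCommGroup Y] [NormedSpace ℝ Y]
    (hdimX : Module.finrank ℝ X = 2) (hdimY : Module.finrank ℝ Y = 2)
    (τ : X → Y)
    (hmap : ∀ u : X, ‖u‖ = 1 → ‖τ u‖ = 1)
    (hsurj : ∀ w : Y, ‖w‖ = 1 → ∃ u : X, ‖u‖ = 1 ∧ τ u = w)
    (hiso : ∀ u v : X, ‖u‖ = 1 → ‖v‖ = 1 → ‖τ u - τ v‖ = ‖u - v‖)
    (hpiece : {u : X | ‖u‖ = 1 ∧ ¬ DifferentiableAt ℝ (fun z : X => ‖z‖) u}.Finite) :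
    {w : Y | ‖w‖ = 1 ∧ ¬ DifferentiableAt ℝ (fun z : Y => ‖z‖) w}.Finite ∧
      ∀ u : X, ‖u‖ = 1 →
        (DifferentiableAt ℝ (fun z : X => ‖z‖) u ↔
         DifferentiableAt ℝ (fun z : Y => ‖z‖) (τ u)) := by
  obtain ⟨himage, hiff⟩ := stmt3_general hdimX τ hmap hsurj hiso
  exact ⟨himage ▸ hpiece.image τ, hiff⟩
end

section
/- Let X be a two-dimensional normed space whose unit sphere S_X is piecewise C¹-differentiable and contains two linearly independent points x, x̄ at which the norm is not differentiable. Then for any two-dimensional normed space Y, every surjective isometry τ : S_X → S_Y is linear (the restriction to S_X of a linear isometry of X onto Y). -/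
/-!
A surjective isometry `τ` of the unit spheres of two planes is odd: otherwise `u ↦ -τ⁻¹(-τ u)`
would be an isometry of `S_X` displacing some `u` along a segment of `S_X`, which is impossible at
the endpoint of that segment. Hence `τ` preserves both `‖u - v‖` and `‖u + v‖`.

At a corner `x` the sphere `S_X` has two half-tangents. Differentiating `‖z + u‖ = ‖τ z + τ u‖` as
`u` tends to `x` along `S_X` shows that `τ x` is a corner of `S_Y` of the same sharpness, so there
is a linear map `T` sending `x` to `τ x` and the half-tangents at `x` to those at `τ x`, and the
one-sided derivatives of the norms at `z + x` and `τ z + τ x` along them agree. Where the norms are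
differentiable at `±z + x` and `±τ z + τ x`, the derivatives therefore correspond under `T` and
annihilate `τ z - T z`; if this vector were nonzero they would be proportional, and the norm would
be differentiable at `τ x`. On the segments of `S_X` through `±x` the half-tangents determine `τ`,
so `τ = T` there. The remaining `z` are countable in number, because the norm of a plane has at most
countably many unit vectors of non-differentiability, so `τ = T` by continuity.
-/

open Filter Topology Set

section Plane

variable {E F : Type*} [AddCommGroup E] [Module ℝ E] [AddCommGroup F] [Module ℝ F]

lemma exists_eq_smul_add_smul (h2 : Module.finrank ℝ E = 2) {a b : E}
    (hab : LinearIndependent ℝ ![a, b]) (v : E) : ∃ s t : ℝ, v = s • a + t • b := by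
  let B := basisOfLinearIndependentOfCardEqFinrank hab (by simp [h2])
  refine ⟨B.coord 0 v, B.coord 1 v, ?_⟩
  simpa [B, Fin.sum_univ_two] using (B.sum_repr v).symm

lemma exists_linearMap_apply_pair (h2 : Module.finrank ℝ E = 2) {a b : E}
    (hab : LinearIndependent ℝ ![a, b]) (a' b' : F) : ∃ L : E →ₗ[ℝ] F, L a = a' ∧ L b = b' := by
  let B := basisOfLinearIndependentOfCardEqFinrank hab (by simp [h2])
  refine ⟨B.constr ℝ ![a', b'], ?_, ?_⟩
  · simpa [B] using B.constr_basis ℝ ![a', b'] 0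
  · simpa [B] using B.constr_basis ℝ ![a', b'] 1

lemma linearIndependent_pair_of_apply_eq_one {f : E →ₗ[ℝ] ℝ} {p q : E} (hp : f p = 1)
    (hq : f q = 1) (hne : p ≠ q) : LinearIndependent ℝ ![p, q] := by
  rw [LinearIndependent.pair_iff' (by rintro rfl; simp at hp)]
  rintro r rfl
  obtain rfl : r = 1 := by simpa [hp] using hq
  simp at hne

end Plane

section SupportFunctional

variable {E : Type*} [NormedAddCommGroup E] [NormedSpace ℝ E]

/-- `f` is a support functional of the unit ball in the direction `x`. The vector `x` is not
required to be a unit vector, and for `x = 0` the condition is just `‖f‖ ≤ 1`. -/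
structure IsSupportFunctional (f : StrongDual ℝ E) (x : E) : Prop where
  opNorm_le : ‖f‖ ≤ 1
  apply_self : f x = ‖x‖

lemma exists_isSupportFunctional (x : E) : ∃ f, IsSupportFunctional f x := by
  obtain ⟨f, hf, hfx⟩ := exists_dual_vector'' ℝ x
  exact ⟨f, hf, hfx⟩

namespace IsSupportFunctional

variable {f : StrongDual ℝ E} {p q : E}

lemma apply_le (hf : IsSupportFunctional f p) (v : E) : f v ≤ ‖v‖ := by
  simpa using (le_abs_self _).trans (f.le_of_opNorm_le hf.opNorm_le v)

lemma of_add (hf : IsSupportFunctional f (p + q)) (hpq : ‖p + q‖ = ‖p‖ + ‖q‖) :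
    IsSupportFunctional f p ∧ IsSupportFunctional f q := by
  have hadd := hf.apply_self
  rw [map_add] at hadd
  have hp := hf.apply_le p
  have hq := hf.apply_le q
  exact ⟨⟨hf.opNorm_le, by linarith⟩, ⟨hf.opNorm_le, by linarith⟩⟩

lemma add (hp : IsSupportFunctional f p) (hq : IsSupportFunctional f q) :
    IsSupportFunctional f (p + q) := by
  refine ⟨hp.opNorm_le, (hp.apply_le _).antisymm ?_⟩
  rw [map_add, hp.apply_self, hq.apply_self]
  exact norm_add_le p q

lemma smul (hp : IsSupportFunctional f p) {r : ℝ} (hr : 0 ≤ r) : IsSupportFunctional f (r • p) :=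
  ⟨hp.opNorm_le, by rw [map_smul, hp.apply_self, norm_smul, Real.norm_of_nonneg hr, smul_eq_mul]⟩

lemma eventually_nhds_add (h2 : Module.finrank ℝ E = 2) (hp : IsSupportFunctional f p)
    (hq : IsSupportFunctional f q) (hpq : LinearIndependent ℝ ![p, q]) :
    ∀ᶠ v in 𝓝 (p + q), IsSupportFunctional f v := by
  have : FiniteDimensional ℝ E := Module.finite_of_finrank_eq_succ h2
  let B := basisOfLinearIndependentOfCardEqFinrank hpq (by simp [h2])
  have hB0 : B 0 = p := by simp [B]
  have hB1 : B 1 = q := by simp [B]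
  have hcoord (i : Fin 2) : ∀ᶠ v in 𝓝 (p + q), 0 < B.coord i v := by
    refine (B.coord i).continuous_of_finiteDimensional.continuousAt.eventually_const_lt ?_
    fin_cases i <;> simp [← hB0, ← hB1]
  filter_upwards [hcoord 0, hcoord 1] with v hs ht
  rw [← B.sum_repr v, Fin.sum_univ_two, hB0, hB1]
  exact (hp.smul hs.le).add (hq.smul ht.le)

end IsSupportFunctional

lemma exists_isSupportFunctional_eventually (h2 : Module.finrank ℝ E = 2) {p q : E}
    (hp : ‖p‖ = 1) (hq : ‖q‖ = 1) (hne : p ≠ q) (hpq : ‖p + q‖ = 2) :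
    ∃ f : StrongDual ℝ E, f p = 1 ∧ f q = 1 ∧ ∀ᶠ v in 𝓝 (p + q), IsSupportFunctional f v := by
  obtain ⟨f, hf⟩ := exists_isSupportFunctional (p + q)
  obtain ⟨hfp, hfq⟩ := hf.of_add (by rw [hpq, hp, hq]; norm_num)
  have hp1 : f p = 1 := hfp.apply_self.trans hp
  have hq1 : f q = 1 := hfq.apply_self.trans hq
  exact ⟨f, hp1, hq1, hfp.eventually_nhds_add h2 hfq
    (linearIndependent_pair_of_apply_eq_one (f := f.toLinearMap) hp1 hq1 hne)⟩

lemma hasFDerivAt_norm_of_eventually {f : StrongDual ℝ E} {x : E}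
    (hf : ∀ᶠ v in 𝓝 x, IsSupportFunctional f v) : HasFDerivAt (fun z : E => ‖z‖) f x :=
  f.hasFDerivAt.congr_of_eventuallyEq (hf.mono fun _ hv => hv.apply_self.symm)

lemma isSupportFunctional_of_hasFDerivAt_norm {f : StrongDual ℝ E} {P : E}
    (hf : HasFDerivAt (fun z : E => ‖z‖) f P) : IsSupportFunctional f P :=
  ⟨by simpa using hf.le_of_lipschitz lipschitzWith_one_norm,
    by rw [← hf.fderiv, hf.differentiableAt.fderiv_norm_self]⟩

/-- `g` is a multiple of `f`, by a factor of absolute value at most `1`. -/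
lemma norm_add_norm_le_max_of_apply_eq_zero (h2 : Module.finrank ℝ E = 2) {f g : StrongDual ℝ E}
    {P Q e : E} (hf : IsSupportFunctional f P) (hg : IsSupportFunctional g Q) (he : e ≠ 0)
    (hfe : f e = 0) (hge : g e = 0) : ‖P‖ + ‖Q‖ ≤ max ‖P + Q‖ ‖P - Q‖ := by
  rcases eq_or_ne P 0 with rfl | hP
  · simp
  have heP : LinearIndependent ℝ ![e, P] := by
    rw [LinearIndependent.pair_iff' he]
    rintro r rfl
    have := hf.apply_self
    rw [map_smul, hfe, smul_zero, eq_comm] at this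
    exact hP (norm_eq_zero.1 this)
  obtain ⟨s, t, rfl⟩ := exists_eq_smul_add_smul h2 heP Q
  have hfQ : f (s • e + t • P) = t * ‖P‖ := by simp [hfe, hf.apply_self]
  have hgQ : ‖s • e + t • P‖ = t * g P := by simp [← hg.apply_self, hge]
  have hle : ‖s • e + t • P‖ ≤ |t * ‖P‖| := by
    rw [hgQ, abs_mul, abs_norm]
    refine (le_abs_self _).trans ?_
    rw [abs_mul]
    gcongr
    simpa using g.le_of_opNorm_le hg.opNorm_le P
  rcases abs_cases (t * ‖P‖) with ⟨habs, -⟩ | ⟨habs, -⟩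
  · refine le_max_of_le_left (le_trans ?_ (hf.apply_le _))
    rw [map_add, hfQ, hf.apply_self]
    linarith
  · refine le_max_of_le_right (le_trans ?_ (hf.apply_le _))
    rw [map_sub, hfQ, hf.apply_self]
    linarith

end SupportFunctional

section DirectionalDerivative

variable {E : Type*} [NormedAddCommGroup E] [NormedSpace ℝ E]

/-- The right derivative at `t = 0` of `t ↦ ‖P + t • h‖`; it exists since the norm is convex. -/
noncomputable def normDirDeriv (P h : E) : ℝ :=
  derivWithin (fun t : ℝ => ‖P + t • h‖) (Ioi 0) 0

lemma convexOn_norm_add_smul (P h : E) : ConvexOn ℝ univ fun t : ℝ => ‖P + t • h‖ := by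
  simpa [Function.comp_def, AffineMap.lineMap_apply, add_comm] using
    convexOn_univ_norm.comp_affineMap (AffineMap.lineMap (k := ℝ) P (P + h))

lemma hasDerivWithinAt_normDirDeriv (P h : E) :
    HasDerivWithinAt (fun t : ℝ => ‖P + t • h‖) (normDirDeriv P h) (Ioi 0) 0 :=
  (convexOn_norm_add_smul P h).hasDerivWithinAt_rightDeriv_of_mem_interior (by simp)

lemma tendsto_norm_slope (P h : E) :
    Tendsto (fun t : ℝ => (‖P + t • h‖ - ‖P‖) / t) (𝓝[>] 0) (𝓝 (normDirDeriv P h)) := by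
  simpa [slope_fun_def_field] using
    (hasDerivWithinAt_iff_tendsto_slope' (by simp)).1 (hasDerivWithinAt_normDirDeriv P h)

lemma normDirDeriv_le_slope (P h : E) {t : ℝ} (ht : 0 < t) :
    normDirDeriv P h ≤ (‖P + t • h‖ - ‖P‖) / t := by
  simpa [normDirDeriv, slope_def_field] using
    (convexOn_norm_add_smul P h).rightDeriv_le_slope_of_mem_interior (by simp) (mem_univ t) ht

lemma normDirDeriv_le_norm (P h : E) : normDirDeriv P h ≤ ‖h‖ := by
  have := norm_add_le P h
  have := normDirDeriv_le_slope P h one_pos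
  rw [one_smul, div_one] at this
  linarith

lemma IsSupportFunctional.apply_le_normDirDeriv {f : StrongDual ℝ E} {P : E}
    (hf : IsSupportFunctional f P) (h : E) : f h ≤ normDirDeriv P h := by
  refine ge_of_tendsto (tendsto_norm_slope P h) ?_
  filter_upwards [self_mem_nhdsWithin] with t (ht : 0 < t)
  have := hf.apply_le (P + t • h)
  rw [map_add, map_smul, hf.apply_self, smul_eq_mul] at this
  rw [le_div_iff₀ ht]
  linarith

lemma normDirDeriv_add_le (P h k : E) :
    normDirDeriv P (h + k) ≤ normDirDeriv P h + normDirDeriv P k := by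
  refine ge_of_tendsto ((tendsto_norm_slope P h).add (tendsto_norm_slope P k)) ?_
  filter_upwards [self_mem_nhdsWithin] with t (ht : 0 < t)
  refine (normDirDeriv_le_slope P (h + k) (half_pos ht)).trans ?_
  have hmid : 2 * ‖P + (t / 2) • (h + k)‖ ≤ ‖P + t • h‖ + ‖P + t • k‖ := by
    have heq : (P + t • h) + (P + t • k) = (2 : ℝ) • (P + (t / 2) • (h + k)) := by module
    calc 2 * ‖P + (t / 2) • (h + k)‖ = ‖(P + t • h) + (P + t • k)‖ := by
          rw [heq, norm_smul, Real.norm_ofNat]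
      _ ≤ ‖P + t • h‖ + ‖P + t • k‖ := norm_add_le _ _
  rw [← add_div, div_div_eq_mul_div]
  gcongr
  linarith

@[simp]
lemma normDirDeriv_zero (P : E) : normDirDeriv P 0 = 0 := by
  simp [normDirDeriv]

lemma normDirDeriv_smul_self (P : E) (r : ℝ) : normDirDeriv P (r • P) = r * ‖P‖ := by
  refine le_antisymm ?_ ?_
  · have ht : 0 < (|r| + 1)⁻¹ := by positivity
    refine (normDirDeriv_le_slope P _ ht).trans_eq ?_
    have hnonneg : 0 ≤ 1 + (|r| + 1)⁻¹ * r := by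
      have := neg_abs_le r
      field_simp
      linarith
    have heq : P + (|r| + 1)⁻¹ • r • P = (1 + (|r| + 1)⁻¹ * r) • P := by module
    rw [heq, norm_smul, Real.norm_of_nonneg hnonneg]
    field_simp
    ring
  · obtain ⟨f, hf⟩ := exists_isSupportFunctional P
    simpa [hf.apply_self] using hf.apply_le_normDirDeriv (r • P)

lemma normDirDeriv_add_smul_self (P h : E) (r : ℝ) :
    normDirDeriv P (h + r • P) = normDirDeriv P h + r * ‖P‖ := by
  refine le_antisymm ?_ ?_
  · simpa only [normDirDeriv_smul_self] using normDirDeriv_add_le P h (r • P)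
  · have := normDirDeriv_add_le P (h + r • P) ((-r) • P)
    rw [normDirDeriv_smul_self, neg_smul, add_neg_cancel_right] at this
    linarith

lemma normDirDeriv_smul (P h : E) {r : ℝ} (hr : 0 ≤ r) :
    normDirDeriv P (r • h) = r * normDirDeriv P h := by
  rcases hr.eq_or_lt with rfl | hr
  · simp
  have hscale : Tendsto (fun s : ℝ => s * r) (𝓝[>] 0) (𝓝[>] 0) := by
    refine tendsto_nhdsWithin_of_tendsto_nhds_of_eventually_within _
      (((continuous_mul_const r).tendsto' 0 0 (zero_mul r)).mono_left nhdsWithin_le_nhds) ?_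
    filter_upwards [self_mem_nhdsWithin] with s hs using mul_pos hs hr
  refine tendsto_nhds_unique (tendsto_norm_slope P (r • h))
    (((tendsto_norm_slope P h).comp hscale |>.const_mul r).congr fun s => ?_)
  simp only [Function.comp, smul_smul]
  field_simp

lemma normDirDeriv_smul_left (P h : E) {r : ℝ} (hr : 0 < r) :
    normDirDeriv (r • P) h = normDirDeriv P h := by
  have hrh : normDirDeriv (r • P) (r • h) = r * normDirDeriv P h := by
    refine tendsto_nhds_unique (tendsto_norm_slope (r • P) (r • h))
      (((tendsto_norm_slope P h).const_mul r).congr fun s => ?_)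
    rw [smul_comm s r h, ← smul_add, norm_smul, norm_smul, Real.norm_of_nonneg hr.le]
    ring
  rw [normDirDeriv_smul _ _ hr.le] at hrh
  exact mul_left_cancel₀ hr.ne' hrh

lemma normDirDeriv_add_left_le {P Q : E} (hPQ : ‖P + Q‖ = ‖P‖ + ‖Q‖) (h : E) :
    normDirDeriv (P + Q) h ≤ normDirDeriv P h := by
  refine ge_of_tendsto (tendsto_norm_slope P h) ?_
  filter_upwards [self_mem_nhdsWithin] with t (ht : 0 < t)
  refine (normDirDeriv_le_slope _ h ht).trans ?_
  have := norm_add_le (P + t • h) Q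
  rw [add_right_comm, hPQ]
  exact div_le_div_of_nonneg_right (by linarith) ht.le

lemma normDirDeriv_eq_of_hasFDerivAt {P : E} {f : StrongDual ℝ E}
    (hf : HasFDerivAt (fun z : E => ‖z‖) f P) (h : E) : normDirDeriv P h = f h :=
  (hf.hasLineDerivAt h).hasDerivWithinAt.derivWithin (uniqueDiffWithinAt_Ioi 0)

lemma mul_normDirDeriv_le (P h : E) (r : ℝ) :
    r * normDirDeriv P h ≤ normDirDeriv P (r • h) := by
  rcases le_total 0 r with hr | hr
  · exact (normDirDeriv_smul P h hr).ge
  · have hadd := normDirDeriv_add_le P (r • h) (-r • h)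
    rw [normDirDeriv_smul P h (neg_nonneg.2 hr), neg_smul, add_neg_cancel,
      normDirDeriv_zero] at hadd
    linarith

lemma exists_isSupportFunctional_of_le_normDirDeriv {P : E} (g : E →ₗ[ℝ] ℝ)
    (hg : ∀ h, g h ≤ normDirDeriv P h) : ∃ f, IsSupportFunctional f P ∧ ∀ h, f h = g h := by
  have hle (v : E) : g v ≤ ‖v‖ := (hg v).trans (normDirDeriv_le_norm P v)
  have hbound (v : E) : ‖g v‖ ≤ 1 * ‖v‖ := by
    have hneg := hle (-v)
    rw [map_neg, norm_neg] at hneg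
    rw [one_mul, Real.norm_eq_abs]
    exact abs_le.2 ⟨by linarith, hle v⟩
  have hneg : g ((-1 : ℝ) • P) ≤ _ := hg _
  rw [normDirDeriv_smul_self, map_smul, smul_eq_mul] at hneg
  exact ⟨g.mkContinuous 1 hbound, ⟨g.mkContinuous_norm_le zero_le_one _,
    (hle P).antisymm (by linarith)⟩, fun _ => rfl⟩

lemma exists_isSupportFunctional_apply_eq_normDirDeriv (P h : E) :
    ∃ f, IsSupportFunctional f P ∧ f h = normDirDeriv P h := by
  by_cases hh : h = 0
  · obtain ⟨f, hf⟩ := exists_isSupportFunctional P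
    exact ⟨f, hf, by simp [hh]⟩
  let f₀ : E →ₗ.[ℝ] ℝ := LinearPMap.mkSpanSingleton (K := ℝ) h (normDirDeriv P h) hh
  have hf₀ (v : f₀.domain) : f₀ v ≤ normDirDeriv P v := by
    obtain ⟨v, hv⟩ := v
    obtain ⟨r, rfl⟩ := Submodule.mem_span_singleton.1 hv
    exact (LinearPMap.mkSpanSingleton'_apply h _ _ r hv).trans_le (mul_normDirDeriv_le P h r)
  obtain ⟨g, hext, hle⟩ := exists_extension_of_le_sublinear f₀ (normDirDeriv P)
    (fun c hc k => normDirDeriv_smul P k hc.le) (normDirDeriv_add_le P) hf₀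
  obtain ⟨f, hf, hfg⟩ := exists_isSupportFunctional_of_le_normDirDeriv g hle
  refine ⟨f, hf, (hfg h).trans ((hext ⟨h, Submodule.mem_span_singleton_self h⟩).trans ?_)⟩
  exact LinearPMap.mkSpanSingleton_apply ..

lemma tendsto_norm_sub_div_of_tangent {P h : E} {c : ℝ → E} {l : Filter ℝ} (hl : l ≤ 𝓝[>] 0)
    (hc : Tendsto (fun s => s⁻¹ • (c s - P)) l (𝓝 h)) :
    Tendsto (fun s => (‖c s‖ - ‖P‖) / s) l (𝓝 (normDirDeriv P h)) := by
  have hdist : Tendsto (fun s => ‖s⁻¹ • (c s - P) - h‖) l (𝓝 0) := by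
    simpa using (hc.sub_const h).norm
  have hdiff : Tendsto (fun s => (‖c s‖ - ‖P‖) / s - (‖P + s • h‖ - ‖P‖) / s) l (𝓝 0) := by
    refine squeeze_zero_norm' ?_ hdist
    filter_upwards [hl self_mem_nhdsWithin] with s (hs : 0 < s)
    have heq : c s - (P + s • h) = s • (s⁻¹ • (c s - P) - h) := by
      rw [smul_sub, smul_inv_smul₀ hs.ne']; abel
    rw [← sub_div, sub_sub_sub_cancel_right, norm_div, Real.norm_of_nonneg hs.le,
      div_le_iff₀ hs, Real.norm_eq_abs]
    refine (abs_norm_sub_norm_le _ _).trans_eq ?_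
    rw [heq, norm_smul, Real.norm_of_nonneg hs.le, mul_comm]
  simpa using hdiff.add ((tendsto_norm_slope P h).mono_left hl)

lemma normDirDeriv_sub_eq_zero_of_norm_add_eq_two {x z : E} (hx : ‖x‖ = 1) (hz : ‖z‖ = 1)
    (hzx : ‖z + x‖ = 2) : normDirDeriv x (z - x) = 0 := by
  obtain ⟨f, hf⟩ := exists_isSupportFunctional (z + x)
  obtain ⟨hfz, hfx⟩ := hf.of_add (by rw [hzx, hz, hx, one_add_one_eq_two])
  have hge := hfx.apply_le_normDirDeriv z
  have hle := normDirDeriv_le_norm x z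
  rw [hfz.apply_self, hz] at hge
  rw [sub_eq_add_neg, ← neg_one_smul ℝ x, normDirDeriv_add_smul_self, hx]
  linarith

end DirectionalDerivative

section Differentiability

variable {E : Type*} [NormedAddCommGroup E] [NormedSpace ℝ E] [FiniteDimensional ℝ E] {P Q : E}

lemma hasFDerivAt_norm_of_normDirDeriv_le {L : StrongDual ℝ E}
    (hL : ∀ h, normDirDeriv P h ≤ L h) : HasFDerivAt (fun z : E => ‖z‖) L P := by
  have heq (h : E) : normDirDeriv P h = L h := by
    refine (hL h).antisymm ?_
    have hneg := hL (-h)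
    have hadd := normDirDeriv_add_le P h (-h)
    rw [map_neg] at hneg
    rw [add_neg_cancel, normDirDeriv_zero] at hadd
    linarith
  refine lipschitzWith_one_norm.hasFDerivAt_of_hasLineDerivAt_of_closure (s := univ) (by simp)
    fun v _ => ?_
  have hright : HasDerivWithinAt (fun t : ℝ => ‖P + t • v‖) (L v) (Ioi 0) 0 :=
    heq v ▸ hasDerivWithinAt_normDirDeriv P v
  have hleft : HasDerivWithinAt (fun t : ℝ => ‖P + t • v‖) (L v) (Iio 0) 0 := by
    have hflip := HasDerivWithinAt.scomp_of_eq (h := fun t : ℝ => -t) (0 : ℝ)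
      (hasDerivWithinAt_normDirDeriv P (-v)) (hasDerivWithinAt_id 0 (Iio 0)).neg
      (fun t ht => by simpa using ht) (by simp)
    simpa [Function.comp_def, heq] using hflip
  have := hleft.Iic_of_Iio.union hright.Ici_of_Ioi
  rwa [Iic_union_Ici, hasDerivWithinAt_univ] at this

lemma exists_normDirDeriv_add_pos (hP : ¬ DifferentiableAt ℝ (fun z : E => ‖z‖) P) :
    ∃ h, 0 < normDirDeriv P h + normDirDeriv P (-h) := by
  contrapose! hP
  obtain ⟨f, hf⟩ := exists_isSupportFunctional P
  refine (hasFDerivAt_norm_of_normDirDeriv_le (L := f) fun h => ?_).differentiableAt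
  have hneg := hf.apply_le_normDirDeriv (-h)
  rw [map_neg] at hneg
  linarith [hP h]

lemma differentiableAt_norm_add (hPQ : ‖P + Q‖ = ‖P‖ + ‖Q‖)
    (hP : DifferentiableAt ℝ (fun z : E => ‖z‖) P) :
    DifferentiableAt ℝ (fun z : E => ‖z‖) (P + Q) :=
  (hasFDerivAt_norm_of_normDirDeriv_le fun h => (normDirDeriv_add_left_le hPQ h).trans_eq
    (normDirDeriv_eq_of_hasFDerivAt hP.hasFDerivAt h)).differentiableAt

end Differentiability

section SphereCurve

variable {E : Type*} [NormedAddCommGroup E] [NormedSpace ℝ E]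

/-- The curve on the unit sphere obtained by radially projecting the line `s ↦ x + s • v`. -/
noncomputable def sphereCurve (x v : E) (s : ℝ) : E := NormedSpace.normalize (x + s • v)

variable {x v : E}

lemma add_smul_ne_zero_of_linearIndependent (h : LinearIndependent ℝ ![x, v]) (s : ℝ) :
    x + s • v ≠ 0 := by
  intro h0
  exact one_ne_zero (LinearIndependent.pair_iff.1 h 1 s (by rwa [one_smul])).1

lemma sphereCurve_zero (hx : ‖x‖ = 1) : sphereCurve x v 0 = x := by
  simp [sphereCurve, NormedSpace.normalize_eq_self_of_norm_eq_one hx]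

lemma norm_sphereCurve (h : LinearIndependent ℝ ![x, v]) (s : ℝ) : ‖sphereCurve x v s‖ = 1 :=
  NormedSpace.norm_normalize (add_smul_ne_zero_of_linearIndependent h s)

lemma continuous_sphereCurve (h : LinearIndependent ℝ ![x, v]) : Continuous (sphereCurve x v) :=
  Continuous.smul (Continuous.inv₀ (by fun_prop) fun s =>
    norm_ne_zero_iff.2 (add_smul_ne_zero_of_linearIndependent h s)) (by fun_prop)

lemma sphereCurve_injective (h : LinearIndependent ℝ ![x, v]) :
    Function.Injective (sphereCurve x v) := by
  intro s t hst
  have hs := inv_ne_zero (norm_ne_zero_iff.2 (add_smul_ne_zero_of_linearIndependent h s))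
  simp only [sphereCurve, NormedSpace.normalize] at hst
  set A := ‖x + s • v‖⁻¹
  set B := ‖x + t • v‖⁻¹
  have hzero : (A - B) • x + (A * s - B * t) • v = 0 := by
    rw [← sub_eq_zero.2 hst]
    module
  obtain ⟨hAB, hcoeff⟩ := LinearIndependent.pair_iff.1 h _ _ hzero
  rw [← sub_eq_zero.1 hAB, ← mul_sub] at hcoeff
  exact sub_eq_zero.1 ((mul_eq_zero.1 hcoeff).resolve_left hs)

lemma tendsto_sphereCurve_slope (hx : ‖x‖ = 1) (h : LinearIndependent ℝ ![x, v]) :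
    Tendsto (fun s => s⁻¹ • (sphereCurve x v s - x)) (𝓝[>] 0)
      (𝓝 (v - normDirDeriv x v • x)) := by
  have hcurve : Tendsto (sphereCurve x v) (𝓝[>] 0) (𝓝 x) :=
    ((continuous_sphereCurve h).tendsto' 0 x (sphereCurve_zero hx)).mono_left nhdsWithin_le_nhds
  refine (((tendsto_norm_slope x v).smul hcurve).const_sub v).congr' ?_
  filter_upwards [self_mem_nhdsWithin] with s (hs : 0 < s)
  have hproj : ‖x + s • v‖ • sphereCurve x v s = x + s • v := NormedSpace.norm_smul_normalize _
  rw [eq_inv_smul_iff₀ hs.ne', smul_sub, smul_smul, mul_div_cancel₀ _ hs.ne', hx, sub_smul,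
    hproj, one_smul]
  abel

lemma mem_closure_sphere_diff_of_countable (h2 : Module.finrank ℝ E = 2) {C : Set E}
    (hC : C.Countable) {z : E} (hz : ‖z‖ = 1) : z ∈ closure (Metric.sphere 0 1 \ C) := by
  obtain ⟨v, hzv⟩ := exists_linearIndependent_pair_of_one_lt_finrank (R := ℝ) (h2 ▸ one_lt_two)
    (norm_ne_zero_iff.1 (hz.trans_ne one_ne_zero))
  have hdense : Dense (sphereCurve z v ⁻¹' C)ᶜ :=
    (hC.preimage_of_injOn (sphereCurve_injective hzv).injOn).dense_compl ℝ
  rw [← sphereCurve_zero (v := v) hz]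
  exact map_mem_closure (continuous_sphereCurve hzv) (hdense 0)
    fun s hs => ⟨by simpa using norm_sphereCurve hzv s, hs⟩

end SphereCurve

section CountableNondifferentiability

variable {E : Type*} [NormedAddCommGroup E] [NormedSpace ℝ E]

lemma exists_isSupportFunctional_ne [FiniteDimensional ℝ E] {x : E}
    (hx : ¬ DifferentiableAt ℝ (fun z : E => ‖z‖) x) :
    ∃ f g, IsSupportFunctional f x ∧ IsSupportFunctional g x ∧ f ≠ g := by
  obtain ⟨h, hh⟩ := exists_normDirDeriv_add_pos hx
  obtain ⟨f, hf, hfh⟩ := exists_isSupportFunctional_apply_eq_normDirDeriv x h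
  obtain ⟨g, hg, hgh⟩ := exists_isSupportFunctional_apply_eq_normDirDeriv x (-h)
  refine ⟨f, g, hf, hg, ?_⟩
  rintro rfl
  rw [map_neg] at hgh
  linarith

open NormedSpace in
lemma isSupportFunctional_inclusionInDoubleDual {f : StrongDual ℝ E} {x : E} (hx : ‖x‖ = 1)
    (hf : IsSupportFunctional f x) :
    IsSupportFunctional (inclusionInDoubleDual ℝ E x) f := by
  refine ⟨(double_dual_bound ℝ E x).trans hx.le, ?_⟩
  have hle := f.le_opNorm x
  have hone : f x = 1 := hf.apply_self.trans hx
  rw [hone, hx, norm_one, mul_one] at hle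
  rw [dual_def, hone]
  exact hle.antisymm hf.opNorm_le

open NormedSpace in
/-- A nonsmooth unit vector yields a nondegenerate segment, hence in the plane an open cone, of
dual vectors at which the dual norm is evaluation at that vector. -/
lemma nonempty_interior_isSupportFunctional_inclusionInDoubleDual (h2 : Module.finrank ℝ E = 2)
    {x : E} (hx : ‖x‖ = 1) (hnd : ¬ DifferentiableAt ℝ (fun z : E => ‖z‖) x) :
    (interior {f | IsSupportFunctional (inclusionInDoubleDual ℝ E x) f}).Nonempty := by
  have : FiniteDimensional ℝ E := Module.finite_of_finrank_eq_succ h2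
  obtain ⟨f, g, hf, hg, hne⟩ := exists_isSupportFunctional_ne hnd
  have hdual : Module.finrank ℝ (StrongDual ℝ E) = 2 :=
    LinearMap.toContinuousLinearMap.finrank_eq.symm.trans (Subspace.dual_finrank_eq.trans h2)
  have hindep : LinearIndependent ℝ ![f, g] :=
    linearIndependent_pair_of_apply_eq_one (f := (inclusionInDoubleDual ℝ E x).toLinearMap)
      (hf.apply_self.trans hx) (hg.apply_self.trans hx) hne
  exact ⟨f + g, mem_interior_iff_mem_nhds.2
    ((isSupportFunctional_inclusionInDoubleDual hx hf).eventually_nhds_add hdual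
      (isSupportFunctional_inclusionInDoubleDual hx hg) hindep)⟩

open NormedSpace in
lemma countable_not_differentiableAt_norm (h2 : Module.finrank ℝ E = 2) :
    {x : E | ‖x‖ = 1 ∧ ¬ DifferentiableAt ℝ (fun z : E => ‖z‖) x}.Countable := by
  have : FiniteDimensional ℝ E := Module.finite_of_finrank_eq_succ h2
  refine PairwiseDisjoint.countable_of_isOpen
    (s := fun x => interior {f | IsSupportFunctional (inclusionInDoubleDual ℝ E x) f}) ?_
    (fun _ _ => isOpen_interior)
    (fun x hx => nonempty_interior_isSupportFunctional_inclusionInDoubleDual h2 hx.1 hx.2)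
  intro x _ y _ hxy
  refine disjoint_left.2 fun f hfx hfy => hxy ?_
  have hderiv := (hasFDerivAt_norm_of_eventually (mem_interior_iff_mem_nhds.1 hfx)).unique
    (hasFDerivAt_norm_of_eventually (mem_interior_iff_mem_nhds.1 hfy))
  exact (inclusionInDoubleDualLi ℝ).injective hderiv

lemma eq_of_wbtw_of_norm_add_ne_two {x y z : E} (hx : ‖x‖ = 1) (hy : ‖y‖ = 1) (hz : ‖z‖ = 1)
    (hxy : ‖y + x‖ ≠ 2) (h : Wbtw ℝ x y z) : y = z := by
  obtain ⟨t, ⟨ht₀, ht⟩, rfl⟩ := h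
  rcases ht.eq_or_lt with rfl | ht
  · simp
  obtain ⟨f, hf⟩ := exists_isSupportFunctional (AffineMap.lineMap x z t)
  have hfz := hf.apply_le z
  have hfy := hf.apply_self
  have hfxy := hf.apply_le (AffineMap.lineMap x z t + x)
  have hle := norm_add_le (AffineMap.lineMap x z t) x
  rw [map_add] at hfxy
  have hcomb : f (AffineMap.lineMap x z t) = (1 - t) * f x + t * f z := by
    simp [AffineMap.lineMap_apply_module]
  have hfx_ge : 1 ≤ f x := by
    have := mul_le_mul_of_nonneg_left (hfz.trans_eq hz) ht₀
    refine le_of_mul_le_mul_left ?_ (sub_pos.2 ht)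
    linarith
  exact absurd (by linarith) hxy

lemma injOn_normalize_add {x : E} (hx : ‖x‖ = 1) :
    InjOn (fun z => NormedSpace.normalize (z + x)) {z | ‖z‖ = 1 ∧ ‖z - x‖ ≠ 2} := by
  rintro y ⟨hy, hyx⟩ z ⟨hz, hzx⟩ heq
  rw [sub_eq_add_neg] at hyx hzx
  rw [← norm_neg] at hx
  have hray : SameRay ℝ (y -ᵥ -x) (z -ᵥ -x) := by
    simpa only [vsub_eq_sub, sub_neg_eq_add] using sameRay_iff_inv_norm_smul_eq.2 (.inr (.inr heq))
  rcases wbtw_total_of_sameRay_vsub_left hray with h | h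
  · exact eq_of_wbtw_of_norm_add_ne_two hx hy hz hyx h
  · exact (eq_of_wbtw_of_norm_add_ne_two hx hz hy hzx h).symm

lemma countable_not_differentiableAt_norm_add (h2 : Module.finrank ℝ E = 2) {x : E}
    (hx : ‖x‖ = 1) :
    {z : E | (‖z‖ = 1 ∧ ‖z - x‖ ≠ 2) ∧
      ¬ DifferentiableAt ℝ (fun w : E => ‖w‖) (z + x)}.Countable := by
  refine MapsTo.countable_of_injOn (f := fun z => NormedSpace.normalize (z + x)) ?_
    ((injOn_normalize_add hx).mono fun z hz => hz.1) (countable_not_differentiableAt_norm h2)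
  rintro z ⟨⟨-, hzx⟩, hnd⟩
  have hne : z + x ≠ 0 := by
    intro h
    rw [eq_neg_of_add_eq_zero_left h, ← neg_add', norm_neg, ← two_smul ℝ, norm_smul, hx] at hzx
    norm_num at hzx
  refine ⟨NormedSpace.norm_normalize hne, fun hd => hnd ?_⟩
  exact (differentiableAt_norm_smul (inv_ne_zero (norm_ne_zero_iff.2 hne))).2 hd

end CountableNondifferentiability

section SphereIsometry

variable {E : Type*} [NormedAddCommGroup E] [NormedSpace ℝ E]

/-- `τ` restricts to a distance preserving map between the unit spheres; its values off the unit
sphere are irrelevant, and it need not be onto. -/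
structure IsSphereIsometry {X Y : Type*} [NormedAddCommGroup X] [NormedAddCommGroup Y]
    (τ : X → Y) : Prop where
  norm_map : ∀ u, ‖u‖ = 1 → ‖τ u‖ = 1
  norm_sub_map : ∀ u v, ‖u‖ = 1 → ‖v‖ = 1 → ‖τ u - τ v‖ = ‖u - v‖

namespace IsSphereIsometry

section

variable {X Y : Type*} [NormedAddCommGroup X] [NormedAddCommGroup Y] {τ : X → Y}

lemma eq_of_map_eq (hτ : IsSphereIsometry τ) {u v : X} (hu : ‖u‖ = 1) (hv : ‖v‖ = 1)
    (h : τ u = τ v) : u = v := by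
  rwa [← norm_sub_eq_zero_iff, ← hτ.norm_sub_map u v hu hv, norm_sub_eq_zero_iff]

lemma continuousOn (hτ : IsSphereIsometry τ) : ContinuousOn τ (Metric.sphere 0 1) := by
  refine (LipschitzOnWith.of_dist_le_mul (K := 1) fun u hu v hv => ?_).continuousOn
  rw [dist_eq_norm, dist_eq_norm, NNReal.coe_one, one_mul]
  exact (hτ.norm_sub_map u v (by simpa using hu) (by simpa using hv)).le

end

variable {σ : E → E}

lemma eventually_isSupportFunctional_of_ne (h2 : Module.finrank ℝ E = 2)
    (hσ : IsSphereIsometry σ) (hadd : ∀ u, ‖u‖ = 1 → ‖u + σ u‖ = 2) {u : E} (hu : ‖u‖ = 1)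
    (hne : σ u ≠ u) :
    ∃ f : StrongDual ℝ E, f u = 1 ∧ f (σ u) = 1 ∧ ∀ᶠ v in 𝓝 u, IsSupportFunctional f v := by
  obtain ⟨f, hfu, hfσ, hf⟩ :=
    exists_isSupportFunctional_eventually h2 hu (hσ.norm_map u hu) hne.symm (hadd u hu)
  refine ⟨f, hfu, hfσ, ?_⟩
  have hu0 : u ≠ 0 := norm_ne_zero_iff.1 (hu.trans_ne one_ne_zero)
  have hnormalize : Tendsto NormedSpace.normalize (𝓝 u) (𝓝[Metric.sphere 0 1] u) := by
    refine tendsto_nhdsWithin_of_tendsto_nhds_of_eventually_within _ ?_ ?_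
    · have hcont : ContinuousAt (fun v : E => ‖v‖⁻¹ • v) u :=
        (continuous_norm.continuousAt.inv₀ (norm_ne_zero_iff.2 hu0)).smul continuousAt_id
      simpa [hu, ← NormedSpace.normalize.eq_def] using hcont.tendsto
    · filter_upwards [eventually_ne_nhds hu0] with v hv using by simpa using hv
  have hsum : Tendsto (fun v => v + σ v) (𝓝[Metric.sphere 0 1] u) (𝓝 (u + σ u)) :=
    tendsto_nhdsWithin_of_tendsto_nhds tendsto_id |>.add (hσ.continuousOn u (by simpa using hu))
  filter_upwards [(hsum.comp hnormalize).eventually hf, eventually_ne_nhds hu0] with v hv hv0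
  have hunit := NormedSpace.norm_normalize hv0
  rw [← NormedSpace.norm_smul_normalize v]
  refine (hv.of_add ?_).1.smul (norm_nonneg v)
  rw [hadd _ hunit, hunit, hσ.norm_map _ hunit, one_add_one_eq_two]

end IsSphereIsometry

lemma eventually_norm_add_smul_eq {f : StrongDual ℝ E} {p e : E}
    (hf : ∀ᶠ v in 𝓝 p, IsSupportFunctional f v) (hmin : ∀ s : ℝ, ‖p‖ ≤ ‖p + s • e‖) :
    ∀ᶠ s : ℝ in 𝓝 0, ‖p + s • e‖ = ‖p‖ := by
  have hfe : f e = 0 :=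
    IsLocalMin.hasDerivAt_eq_zero (.of_forall fun s => by simpa using hmin s)
      ((hasFDerivAt_norm_of_eventually hf).hasLineDerivAt e)
  have hcont : Tendsto (fun s : ℝ => p + s • e) (𝓝 0) (𝓝 p) :=
    Continuous.tendsto' (by fun_prop) _ _ (by simp)
  filter_upwards [hcont.eventually hf] with s hs
  rw [← hs.apply_self, ← hf.self_of_nhds.apply_self, map_add, map_smul, hfe, smul_zero, add_zero]

lemma exists_first_mem_closedBall {u e : E} (hu : ‖u‖ ≤ 1) (he : e ≠ 0) :
    ∃ α ≤ (0 : ℝ), ‖u + α • e‖ ≤ 1 ∧ ∀ s < α, 1 < ‖u + s • e‖ := by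
  have hclosed : IsClosed {s : ℝ | ‖u + s • e‖ ≤ 1} :=
    isClosed_le (by fun_prop) continuous_const
  have hbdd : BddBelow {s : ℝ | ‖u + s • e‖ ≤ 1} := by
    refine ⟨-(2 / ‖e‖), fun s (hs : ‖u + s • e‖ ≤ 1) => ?_⟩
    have hle : |s| * ‖e‖ ≤ 2 := by
      have := norm_sub_le (u + s • e) u
      rw [add_sub_cancel_left, norm_smul, Real.norm_eq_abs] at this
      linarith
    rw [← le_div_iff₀ (norm_pos_iff.2 he)] at hle
    exact (abs_le.1 hle).1
  have hzero : (0 : ℝ) ∈ {s : ℝ | ‖u + s • e‖ ≤ 1} := by simpa using hu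
  exact ⟨sInf _, csInf_le hbdd hzero, hclosed.csInf_mem ⟨0, hzero⟩ hbdd,
    fun s hs => not_le.1 fun h => notMem_of_lt_csInf hs hbdd h⟩

/-- If `u` is displaced, follow the segment of the sphere through `u` and `σ u` backwards to its
endpoint `p`. The norm is linear near any displaced point, so `p` is fixed, and then `u` and
`σ u` are at the same distance from `p`. -/
lemma IsSphereIsometry.eq_self_of_norm_add_eq_two (h2 : Module.finrank ℝ E = 2) {σ : E → E}
    (hσ : IsSphereIsometry σ) (hadd : ∀ u, ‖u‖ = 1 → ‖u + σ u‖ = 2) {u : E} (hu : ‖u‖ = 1) :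
    σ u = u := by
  by_contra hne
  obtain ⟨f, hfu, hfσ, hf⟩ := hσ.eventually_isSupportFunctional_of_ne h2 hadd hu hne
  set e := σ u - u with he
  have he0 : e ≠ 0 := sub_ne_zero.2 hne
  have hline (s : ℝ) : 1 ≤ ‖u + s • e‖ := by
    simpa [he, hfu, hfσ] using hf.self_of_nhds.apply_le (u + s • e)
  obtain ⟨α, hα, hle, hlt⟩ := exists_first_mem_closedBall hu.le he0
  have hp : ‖u + α • e‖ = 1 := hle.antisymm (hline α)
  have hfix : σ (u + α • e) = u + α • e := by
    by_contra hmoved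
    obtain ⟨g, -, -, hg⟩ := hσ.eventually_isSupportFunctional_of_ne h2 hadd hp hmoved
    have hmin (s : ℝ) : ‖u + α • e‖ ≤ ‖u + α • e + s • e‖ := by
      rw [hp, add_assoc, ← add_smul]
      exact hline (α + s)
    obtain ⟨s, hs, hs0⟩ := ((eventually_norm_add_smul_eq hg hmin).filter_mono
      nhdsWithin_le_nhds |>.and (self_mem_nhdsWithin (s := Iio 0))).exists
    rw [add_assoc, ← add_smul] at hs
    exact (hlt (α + s) (add_lt_of_neg_right α hs0)).ne' (hs.trans hp)
  have hdist := hσ.norm_sub_map u _ hu hp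
  have hσu : σ u = u + (1 : ℝ) • e := by simp [he]
  rw [hfix, hσu, add_sub_add_left_eq_sub, ← sub_smul, sub_add_cancel_left, norm_neg, norm_smul,
    norm_smul, Real.norm_of_nonneg (by linarith), Real.norm_of_nonpos hα] at hdist
  have := mul_right_cancel₀ (norm_ne_zero_iff.2 he0) hdist
  linarith

lemma IsSphereIsometry.map_neg {X Y : Type*} [NormedAddCommGroup X] [NormedSpace ℝ X]
    [NormedAddCommGroup Y] [NormedSpace ℝ Y] (h2 : Module.finrank ℝ X = 2) {τ : X → Y}
    (hτ : IsSphereIsometry τ) (hsurj : ∀ w, ‖w‖ = 1 → ∃ u, ‖u‖ = 1 ∧ τ u = w)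
    {u : X} (hu : ‖u‖ = 1) : τ (-u) = -τ u := by
  choose! ι hι hτι using hsurj
  have hneg (v : X) (hv : ‖v‖ = 1) : ‖-τ v‖ = 1 := by rw [norm_neg, hτ.norm_map v hv]
  have hσ : IsSphereIsometry fun v => -ι (-τ v) := by
    refine ⟨fun v hv => by rw [norm_neg, hι _ (hneg v hv)], fun v w hv hw => ?_⟩
    rw [← neg_sub', norm_neg, ← hτ.norm_sub_map _ _ (hι _ (hneg v hv)) (hι _ (hneg w hw)),
      hτι _ (hneg v hv), hτι _ (hneg w hw), ← neg_sub', norm_neg, hτ.norm_sub_map v w hv hw]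
  have hadd (v : X) (hv : ‖v‖ = 1) : ‖v + -ι (-τ v)‖ = 2 := by
    rw [← sub_eq_add_neg, ← hτ.norm_sub_map _ _ hv (hι _ (hneg v hv)), hτι _ (hneg v hv),
      sub_neg_eq_add, ← two_smul ℝ, norm_smul, hτ.norm_map v hv, Real.norm_ofNat, mul_one]
  have hfix := hσ.eq_self_of_norm_add_eq_two h2 hadd hu
  rw [← hτι _ (hneg u hu), ← neg_eq_iff_eq_neg.1 hfix]

/-- A map restricting to an odd distance preserving map between the unit spheres. -/
structure IsOddSphereIsometry {X Y : Type*} [NormedAddCommGroup X] [NormedAddCommGroup Y]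
    (τ : X → Y) : Prop extends IsSphereIsometry τ where
  map_neg : ∀ u, ‖u‖ = 1 → τ (-u) = -τ u

lemma IsOddSphereIsometry.norm_add_map {X Y : Type*} [NormedAddCommGroup X]
    [NormedAddCommGroup Y] {τ : X → Y} (hτ : IsOddSphereIsometry τ) {u v : X} (hu : ‖u‖ = 1)
    (hv : ‖v‖ = 1) : ‖τ u + τ v‖ = ‖u + v‖ := by
  rw [← sub_neg_eq_add, ← hτ.map_neg v hv, hτ.norm_sub_map u (-v) hu (by rwa [norm_neg]),
    sub_neg_eq_add]

end SphereIsometry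

section Corner

variable {E : Type*} [NormedAddCommGroup E] [NormedSpace ℝ E]

/-- `x` is a corner of the unit sphere with half-tangents `a` and `b`, scaled so that their sum is
a multiple of `x`; the number `k > 0` measures how sharp the corner is. -/
structure HasNormCorner (x a b : E) (k : ℝ) : Prop where
  norm_eq : ‖x‖ = 1
  pos : 0 < k
  add_eq : a + b = (-k) • x
  left : normDirDeriv x a = 0
  right : normDirDeriv x b = 0

lemma linearIndependent_of_normDirDeriv_eq_zero {x a : E} (hx : x ≠ 0) (ha : a ≠ 0)
    (h : normDirDeriv x a = 0) : LinearIndependent ℝ ![x, a] := by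
  rw [LinearIndependent.pair_iff' hx]
  rintro r rfl
  obtain rfl : r = 0 := by simpa [normDirDeriv_smul_self, hx] using h
  exact ha (zero_smul ℝ x)

lemma exists_hasNormCorner [FiniteDimensional ℝ E] {x : E} (hx : ‖x‖ = 1)
    (hnd : ¬ DifferentiableAt ℝ (fun z : E => ‖z‖) x) : ∃ a b k, HasNormCorner x a b k := by
  obtain ⟨h, hh⟩ := exists_normDirDeriv_add_pos hnd
  have htangent (v : E) : normDirDeriv x (v + (-normDirDeriv x v) • x) = 0 := by
    rw [normDirDeriv_add_smul_self, hx, mul_one, add_neg_cancel]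
  exact ⟨_, _, _, hx, hh, by module, htangent h, htangent (-h)⟩

namespace HasNormCorner

variable {x a b : E} {k : ℝ}

lemma symm (h : HasNormCorner x a b k) : HasNormCorner x b a k :=
  ⟨h.norm_eq, h.pos, by rw [add_comm, h.add_eq], h.right, h.left⟩

lemma ne_zero (h : HasNormCorner x a b k) : x ≠ 0 :=
  norm_ne_zero_iff.1 (h.norm_eq.trans_ne one_ne_zero)

lemma left_ne_zero (h : HasNormCorner x a b k) : a ≠ 0 := by
  rintro rfl
  have hb := h.right
  rw [← zero_add b, h.add_eq, normDirDeriv_smul_self, h.norm_eq, mul_one] at hb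
  exact h.pos.ne' (neg_eq_zero.1 hb)

lemma linearIndependent_left (h : HasNormCorner x a b k) : LinearIndependent ℝ ![x, a] :=
  linearIndependent_of_normDirDeriv_eq_zero h.ne_zero h.left_ne_zero h.left

lemma linearIndependent (h : HasNormCorner x a b k) : LinearIndependent ℝ ![a, b] := by
  have hxa := h.linearIndependent_left
  rw [LinearIndependent.pair_iff] at hxa ⊢
  intro s t hst
  obtain ⟨htk, hsub⟩ := hxa (-(t * k)) (s - t) <| by
    calc (-(t * k)) • x + (s - t) • a = t • ((-k) • x) + (s - t) • a := by module
      _ = s • a + t • b := by rw [← h.add_eq]; module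
      _ = 0 := hst
  obtain rfl : t = 0 := by simpa [h.pos.ne'] using htk
  exact ⟨by simpa using hsub, rfl⟩

lemma not_differentiableAt (h : HasNormCorner x a b k) :
    ¬ DifferentiableAt ℝ (fun z : E => ‖z‖) x := by
  intro hd
  have hderiv := normDirDeriv_eq_of_hasFDerivAt hd.hasFDerivAt
  have hsum := congrArg (fderiv ℝ (fun z : E => ‖z‖) x) h.add_eq
  rw [map_add, ← hderiv, ← hderiv, h.left, h.right, map_smul, hd.fderiv_norm_self, h.norm_eq,
    add_zero, smul_eq_mul, mul_one] at hsum
  exact h.pos.ne' (neg_eq_zero.1 hsum.symm)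

lemma normDirDeriv_smul_add_smul (h : HasNormCorner x a b k) {s t : ℝ} (hst : t ≤ s) :
    normDirDeriv x (s • a + t • b) = -(t * k) := by
  have heq : s • a + t • b = (s - t) • a + (-(t * k)) • x := by
    calc s • a + t • b = (s - t) • a + t • (a + b) := by module
      _ = (s - t) • a + (-(t * k)) • x := by rw [h.add_eq]; module
  rw [heq, normDirDeriv_add_smul_self, normDirDeriv_smul _ _ (sub_nonneg.2 hst), h.left,
    h.norm_eq, mul_zero, zero_add, mul_one]

lemma exists_eq_smul_of_normDirDeriv_eq_zero (h2 : Module.finrank ℝ E = 2)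
    (h : HasNormCorner x a b k) {v : E} (hv : normDirDeriv x v = 0) :
    ∃ r : ℝ, 0 ≤ r ∧ (v = r • a ∨ v = r • b) := by
  obtain ⟨s, t, rfl⟩ := exists_eq_smul_add_smul h2 h.linearIndependent v
  rcases le_total t s with hts | hst
  · rw [h.normDirDeriv_smul_add_smul hts] at hv
    obtain rfl : t = 0 := by simpa [h.pos.ne'] using hv
    exact ⟨s, hts, Or.inl (by simp)⟩
  · rw [add_comm, h.symm.normDirDeriv_smul_add_smul hst] at hv
    obtain rfl : s = 0 := by simpa [h.pos.ne'] using hv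
    exact ⟨t, hst, Or.inr (by simp)⟩

end HasNormCorner

end Corner

section Tangent

variable {E : Type*} [NormedAddCommGroup E] [NormedSpace ℝ E]

lemma exists_tendsto_of_tendsto_norm {F ι : Type*} [SeminormedAddCommGroup F] [ProperSpace F]
    {l : Ultrafilter ι} {f : ι → F} {r : ℝ} (hf : Tendsto (fun i => ‖f i‖) l (𝓝 r)) :
    ∃ a, Tendsto f l (𝓝 a) := by
  have hbdd : ∀ᶠ i in (l : Filter ι), f i ∈ Metric.closedBall (0 : F) (r + 1) := by
    filter_upwards [hf.eventually_le_const (lt_add_one r)] with i hi using by simpa using hi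
  obtain ⟨a, -, ha⟩ := (isCompact_closedBall (0 : F) (r + 1)).ultrafilter_le_nhds' (l.map f) hbdd
  exact ⟨a, ha⟩

lemma normDirDeriv_eq_zero_of_tangent {y a : E} {c : ℝ → E} {l : Filter ℝ} [l.NeBot]
    (hl : l ≤ 𝓝[>] 0) (hc : ∀ s, ‖c s‖ = ‖y‖)
    (ha : Tendsto (fun s => s⁻¹ • (c s - y)) l (𝓝 a)) : normDirDeriv y a = 0 := by
  refine tendsto_nhds_unique (tendsto_norm_sub_div_of_tangent hl ha) ?_
  simp [hc]

lemma exists_normDirDeriv_le_tendsto {y a : E} {c : ℝ → E} {l : Filter ℝ} (hl : l ≤ 𝓝[>] 0)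
    (ha : normDirDeriv y a = 0) (hc : Tendsto (fun s => s⁻¹ • (c s - y)) l (𝓝 a)) (α β : ℝ) :
    ∃ B : ℝ → ℝ, Tendsto B l (𝓝 (α * ‖y‖)) ∧
      ∀ᶠ s in l, normDirDeriv (c s) (α • y + β • a) ≤ B s := by
  set w := α • y + β • a with hw
  set θ : ℝ := (|β| + 1)⁻¹
  have hθ : 0 < θ := by positivity
  have hθβ : 0 ≤ 1 + θ * β := by
    have := neg_abs_le β
    simp only [θ]
    field_simp
    linarith
  have hshift : Tendsto (fun s => s⁻¹ • (c s + (θ * s) • w - y)) l (𝓝 (a + θ • w)) := by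
    refine (hc.add_const (θ • w)).congr' ?_
    filter_upwards [hl self_mem_nhdsWithin] with s (hs : 0 < s)
    rw [mul_comm, mul_smul, add_sub_right_comm, smul_add s⁻¹, inv_smul_smul₀ hs.ne']
  have hderiv : normDirDeriv y (a + θ • w) = θ * (α * ‖y‖) := by
    rw [show a + θ • w = (1 + θ * β) • a + (θ * α) • y by rw [hw]; module,
      normDirDeriv_add_smul_self, normDirDeriv_smul _ _ hθβ, ha, mul_zero, zero_add, mul_assoc]
  refine ⟨fun s => (‖c s + (θ * s) • w‖ - ‖c s‖) / (θ * s), ?_, ?_⟩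
  · have hdiff := ((tendsto_norm_sub_div_of_tangent hl hshift).sub
      (tendsto_norm_sub_div_of_tangent hl hc)).div_const θ
    rw [hderiv, ha, sub_zero, mul_div_cancel_left₀ _ hθ.ne'] at hdiff
    refine hdiff.congr fun s => ?_
    rw [← sub_div, sub_sub_sub_cancel_right, div_div, mul_comm s]
  · filter_upwards [hl self_mem_nhdsWithin] with s hs
    exact normDirDeriv_le_slope _ _ (mul_pos hθ hs)

lemma tendsto_normDirDeriv_along_tangent {y a : E} {c : ℝ → E} {l : Filter ℝ} (hl : l ≤ 𝓝[>] 0)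
    (ha : normDirDeriv y a = 0) (hc : Tendsto (fun s => s⁻¹ • (c s - y)) l (𝓝 a)) (α β : ℝ) :
    Tendsto (fun s => normDirDeriv (c s) (α • y + β • a)) l (𝓝 (α * ‖y‖)) := by
  obtain ⟨B, hB, hle⟩ := exists_normDirDeriv_le_tendsto hl ha hc α β
  obtain ⟨C, hC, hge⟩ := exists_normDirDeriv_le_tendsto hl ha hc (-α) (-β)
  rw [neg_mul] at hC
  refine tendsto_of_tendsto_of_tendsto_of_le_of_le' (neg_neg (α * ‖y‖) ▸ hC.neg) hB ?_ hle
  filter_upwards [hge] with s hs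
  have hneg := mul_normDirDeriv_le (c s) (α • y + β • a) (-1)
  rw [show (-1 : ℝ) • (α • y + β • a) = -α • y + -β • a by module] at hneg
  linarith

lemma tendsto_normDirDeriv_add_along_tangent {y a : E} {c : ℝ → E} {l : Filter ℝ}
    (hl : l ≤ 𝓝[>] 0) (hy : ‖y‖ = 1) (ha : normDirDeriv y a = 0)
    (hc : Tendsto (fun s => s⁻¹ • (c s - y)) l (𝓝 a)) (α β : ℝ) :
    Tendsto (fun s => normDirDeriv (c s + y) (α • y + β • a)) l (𝓝 α) := by
  have ha2 : normDirDeriv ((2 : ℝ) • y) a = 0 := by rw [normDirDeriv_smul_left _ _ two_pos, ha]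
  have hc2 : Tendsto (fun s => s⁻¹ • (c s + y - (2 : ℝ) • y)) l (𝓝 a) := by
    simpa only [two_smul, add_sub_add_right_eq_sub] using hc
  have hlim := tendsto_normDirDeriv_along_tangent hl ha2 hc2 (α / 2) β
  rwa [smul_smul, norm_smul, hy, Real.norm_ofNat, mul_one, div_mul_cancel₀ _ two_ne_zero] at hlim

end Tangent

section TangentImage

variable {X Y : Type*} [NormedAddCommGroup X] [NormedSpace ℝ X] [NormedAddCommGroup Y]
  [NormedSpace ℝ Y] {τ : X → Y} {x a b : X} {a' b' : Y} {k : ℝ}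

/-- `a'` is a half-tangent at `τ x` of the image under `τ` of the unit sphere at `x` traversed in
the direction `a`. The limit is along an ultrafilter, so that its existence is a matter of
compactness. -/
def IsTangentImage (τ : X → Y) (x a : X) (a' : Y) : Prop :=
  Tendsto (fun s => s⁻¹ • (τ (sphereCurve x a s) - τ x)) (Ultrafilter.of (𝓝[>] (0 : ℝ))) (𝓝 a')

lemma tendsto_sphereCurve_slope_of_normDirDeriv_eq_zero (hx : ‖x‖ = 1)
    (hxa : LinearIndependent ℝ ![x, a]) (ha : normDirDeriv x a = 0) :
    Tendsto (fun s => s⁻¹ • (sphereCurve x a s - x)) (Ultrafilter.of (𝓝[>] (0 : ℝ))) (𝓝 a) := by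
  simpa [ha] using (tendsto_sphereCurve_slope hx hxa).mono_left (Ultrafilter.of_le _)

lemma IsSphereIsometry.tendsto_norm_slope_sphereCurve (hτ : IsSphereIsometry τ) (hx : ‖x‖ = 1)
    (hxa : LinearIndependent ℝ ![x, a]) (ha : normDirDeriv x a = 0) :
    Tendsto (fun s => ‖s⁻¹ • (τ (sphereCurve x a s) - τ x)‖) (Ultrafilter.of (𝓝[>] (0 : ℝ)))
      (𝓝 ‖a‖) := by
  simpa only [norm_smul, hτ.norm_sub_map _ _ (norm_sphereCurve hxa _) hx]
    using (tendsto_sphereCurve_slope_of_normDirDeriv_eq_zero hx hxa ha).norm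

lemma IsSphereIsometry.exists_isTangentImage [FiniteDimensional ℝ Y] (hτ : IsSphereIsometry τ)
    (hx : ‖x‖ = 1) (hxa : LinearIndependent ℝ ![x, a]) (ha : normDirDeriv x a = 0) :
    ∃ a', IsTangentImage τ x a a' :=
  have := FiniteDimensional.proper_real Y
  exists_tendsto_of_tendsto_norm (hτ.tendsto_norm_slope_sphereCurve hx hxa ha)

namespace IsTangentImage

lemma norm_eq (h : IsTangentImage τ x a a') (hτ : IsSphereIsometry τ) (hx : ‖x‖ = 1)
    (hxa : LinearIndependent ℝ ![x, a]) (ha : normDirDeriv x a = 0) : ‖a'‖ = ‖a‖ :=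
  tendsto_nhds_unique h.norm (hτ.tendsto_norm_slope_sphereCurve hx hxa ha)

lemma normDirDeriv_eq_zero (h : IsTangentImage τ x a a') (hτ : IsSphereIsometry τ)
    (hx : ‖x‖ = 1) (hxa : LinearIndependent ℝ ![x, a]) : normDirDeriv (τ x) a' = 0 :=
  normDirDeriv_eq_zero_of_tangent (Ultrafilter.of_le _)
    (fun s => by rw [hτ.norm_map _ (norm_sphereCurve hxa s), hτ.norm_map x hx]) h

lemma linearIndependent (h : IsTangentImage τ x a a') (hτ : IsSphereIsometry τ) (hx : ‖x‖ = 1)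
    (hxa : LinearIndependent ℝ ![x, a]) (ha : normDirDeriv x a = 0) :
    LinearIndependent ℝ ![τ x, a'] := by
  refine linearIndependent_of_normDirDeriv_eq_zero ?_ ?_ (h.normDirDeriv_eq_zero hτ hx hxa)
  · exact norm_ne_zero_iff.1 ((hτ.norm_map x hx).trans_ne one_ne_zero)
  · exact norm_ne_zero_iff.1
      ((h.norm_eq hτ hx hxa ha).trans_ne (norm_ne_zero_iff.2 (hxa.ne_zero 1)))

lemma normDirDeriv_add (h : IsTangentImage τ x a a') (hτ : IsOddSphereIsometry τ)
    (hx : ‖x‖ = 1) (hxa : LinearIndependent ℝ ![x, a]) (ha : normDirDeriv x a = 0) {z : X}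
    (hz : ‖z‖ = 1) : normDirDeriv (τ z + τ x) a' = normDirDeriv (z + x) a := by
  have hcurve : Tendsto (fun s => s⁻¹ • (z + sphereCurve x a s - (z + x)))
      (Ultrafilter.of (𝓝[>] (0 : ℝ))) (𝓝 a) := by
    simpa only [add_sub_add_left_eq_sub]
      using tendsto_sphereCurve_slope_of_normDirDeriv_eq_zero hx hxa ha
  have himage : Tendsto (fun s => s⁻¹ • (τ z + τ (sphereCurve x a s) - (τ z + τ x)))
      (Ultrafilter.of (𝓝[>] (0 : ℝ))) (𝓝 a') := by
    simpa only [add_sub_add_left_eq_sub, IsTangentImage] using h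
  have hlim := tendsto_norm_sub_div_of_tangent (Ultrafilter.of_le _) himage
  simp only [hτ.norm_add_map hz hx, hτ.norm_add_map hz (norm_sphereCurve hxa _)] at hlim
  exact tendsto_nhds_unique hlim (tendsto_norm_sub_div_of_tangent (Ultrafilter.of_le _) hcurve)

/-- Both coefficients are the limit of the derivative of the norm in the direction `b` at
`c s + x`, where `c` is the curve defining `a'`; `τ` preserves these derivatives. -/
lemma coeff_eq (haa' : IsTangentImage τ x a a') (hbb' : IsTangentImage τ x b b')
    (hτ : IsOddSphereIsometry τ) (hx : ‖x‖ = 1) (hxa : LinearIndependent ℝ ![x, a])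
    (hxb : LinearIndependent ℝ ![x, b]) (ha : normDirDeriv x a = 0) (hb : normDirDeriv x b = 0)
    {α β α' β' : ℝ} (hcoord : b = α • x + β • a) (hcoord' : b' = α' • τ x + β' • a') :
    α' = α := by
  have hτ' := hτ.toIsSphereIsometry
  have hlim := tendsto_normDirDeriv_add_along_tangent (Ultrafilter.of_le _) hx ha
    (tendsto_sphereCurve_slope_of_normDirDeriv_eq_zero hx hxa ha) α β
  have hlim' := tendsto_normDirDeriv_add_along_tangent (Ultrafilter.of_le _) (hτ.norm_map x hx)
    (haa'.normDirDeriv_eq_zero hτ' hx hxa) haa' α' β'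
  rw [← hcoord] at hlim
  simp only [← hcoord', hbb'.normDirDeriv_add hτ hx hxb hb (norm_sphereCurve hxa _)] at hlim'
  exact tendsto_nhds_unique hlim' hlim

end IsTangentImage

/-- Each of `a'`, `b'` is `-k • τ x` up to a multiple of the other one. -/
lemma HasNormCorner.map (hc : HasNormCorner x a b k) (h2 : Module.finrank ℝ Y = 2)
    (hτ : IsOddSphereIsometry τ) (haa' : IsTangentImage τ x a a')
    (hbb' : IsTangentImage τ x b b') : HasNormCorner (τ x) a' b' k := by
  have hτ' := hτ.toIsSphereIsometry
  have hx := hc.norm_eq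
  have hxa := hc.linearIndependent_left
  have hxb := hc.symm.linearIndependent_left
  have hxa' := haa'.linearIndependent hτ' hx hxa hc.left
  have hxb' := hbb'.linearIndependent hτ' hx hxb hc.right
  obtain ⟨α, β, hb'⟩ := exists_eq_smul_add_smul h2 hxa' b'
  obtain ⟨γ, δ, ha'⟩ := exists_eq_smul_add_smul h2 hxb' a'
  obtain rfl : α = -k := haa'.coeff_eq hbb' hτ hx hxa hxb hc.left hc.right
    (β := -1) (by rw [← hc.add_eq]; module) hb'
  obtain rfl : γ = -k := hbb'.coeff_eq haa' hτ hx hxb hxa hc.right hc.left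
    (β := -1) (by rw [← hc.add_eq]; module) ha'
  have hzero : (-k * (1 + β)) • τ x + (β * δ - 1) • b' = 0 := by
    calc (-k * (1 + β)) • τ x + (β * δ - 1) • b'
        = (-k) • τ x + β • ((-k) • τ x + δ • b') - b' := by module
      _ = 0 := by rw [← ha', ← hb', sub_self]
  have hmul := (LinearIndependent.pair_iff.1 hxb' _ _ hzero).1
  have hβ : 1 + β = 0 := (mul_eq_zero.1 hmul).resolve_left (neg_ne_zero.2 hc.pos.ne')
  obtain rfl : β = -1 := by linarith
  exact ⟨hτ.norm_map x hx, hc.pos, by rw [hb']; module,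
    haa'.normDirDeriv_eq_zero hτ' hx hxa, hbb'.normDirDeriv_eq_zero hτ' hx hxb⟩

end TangentImage

section CornerDeriv

/-- The linear map `T` matches the half-tangents of the unit spheres at the corners `x` and `τ x`:
it is the only possible linear extension of `τ`. -/
structure HasCornerDeriv {X Y : Type*} [NormedAddCommGroup X] [NormedSpace ℝ X]
    [NormedAddCommGroup Y] [NormedSpace ℝ Y] (τ : X → Y) (T : X →ₗ[ℝ] Y) (x a b : X) (k : ℝ) :
    Prop where
  corner : HasNormCorner x a b k
  corner_map : HasNormCorner (τ x) (T a) (T b) k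
  norm_left : ‖T a‖ = ‖a‖
  norm_right : ‖T b‖ = ‖b‖
  normDirDeriv_left : ∀ z, ‖z‖ = 1 → normDirDeriv (τ z + τ x) (T a) = normDirDeriv (z + x) a
  normDirDeriv_right : ∀ z, ‖z‖ = 1 → normDirDeriv (τ z + τ x) (T b) = normDirDeriv (z + x) b

variable {X Y : Type*} [NormedAddCommGroup X] [NormedSpace ℝ X] [NormedAddCommGroup Y]
  [NormedSpace ℝ Y] {τ : X → Y} {T : X →ₗ[ℝ] Y} {x a b : X} {k : ℝ}

lemma IsOddSphereIsometry.exists_hasCornerDeriv (hτ : IsOddSphereIsometry τ)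
    (hX : Module.finrank ℝ X = 2) (hY : Module.finrank ℝ Y = 2) (hx : ‖x‖ = 1)
    (hnd : ¬ DifferentiableAt ℝ (fun z : X => ‖z‖) x) : ∃ T a b k, HasCornerDeriv τ T x a b k := by
  have : FiniteDimensional ℝ X := Module.finite_of_finrank_eq_succ hX
  have : FiniteDimensional ℝ Y := Module.finite_of_finrank_eq_succ hY
  have hτ' := hτ.toIsSphereIsometry
  obtain ⟨a, b, k, hc⟩ := exists_hasNormCorner hx hnd
  have hxa := hc.linearIndependent_left
  have hxb := hc.symm.linearIndependent_left
  obtain ⟨a', haa'⟩ := hτ'.exists_isTangentImage hx hxa hc.left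
  obtain ⟨b', hbb'⟩ := hτ'.exists_isTangentImage hx hxb hc.right
  obtain ⟨T, rfl, rfl⟩ := exists_linearMap_apply_pair hX hc.linearIndependent a' b'
  exact ⟨T, a, b, k, hc, hc.map hY hτ haa' hbb', haa'.norm_eq hτ' hx hxa hc.left,
    hbb'.norm_eq hτ' hx hxb hc.right, fun z => haa'.normDirDeriv_add hτ hx hxa hc.left,
    fun z => hbb'.normDirDeriv_add hτ hx hxb hc.right⟩

namespace HasCornerDeriv

lemma symm (h : HasCornerDeriv τ T x a b k) : HasCornerDeriv τ T x b a k :=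
  ⟨h.corner.symm, h.corner_map.symm, h.norm_right, h.norm_left, h.normDirDeriv_right,
    h.normDirDeriv_left⟩

lemma map_eq (h : HasCornerDeriv τ T x a b k) : T x = τ x := by
  have hsum := h.corner_map.add_eq
  rw [← map_add, h.corner.add_eq, map_smul] at hsum
  exact smul_right_injective Y (neg_ne_zero.2 h.corner.pos.ne') hsum

lemma apply_map_eq (h : HasCornerDeriv τ T x a b k) (h2 : Module.finrank ℝ X = 2)
    {f : StrongDual ℝ X} {g : StrongDual ℝ Y} {z : X} (hz : ‖z‖ = 1)
    (hf : HasFDerivAt (fun z : X => ‖z‖) f (z + x))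
    (hg : HasFDerivAt (fun z : Y => ‖z‖) g (τ z + τ x)) (v : X) : g (T v) = f v := by
  have hleft := h.normDirDeriv_left z hz
  have hright := h.normDirDeriv_right z hz
  simp only [normDirDeriv_eq_of_hasFDerivAt hf, normDirDeriv_eq_of_hasFDerivAt hg] at hleft hright
  obtain ⟨s, t, rfl⟩ := exists_eq_smul_add_smul h2 h.corner.linearIndependent v
  simp only [map_add, map_smul, hleft, hright]

lemma apply_sub_eq_zero (h : HasCornerDeriv τ T x a b k) (h2 : Module.finrank ℝ X = 2)
    (hτ : IsOddSphereIsometry τ) {g : StrongDual ℝ Y} {z : X} (hz : ‖z‖ = 1)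
    (hd : DifferentiableAt ℝ (fun z : X => ‖z‖) (z + x))
    (hg : HasFDerivAt (fun z : Y => ‖z‖) g (τ z + τ x)) : g (τ z - T z) = 0 := by
  have hsum := h.apply_map_eq h2 hz hd.hasFDerivAt hg (z + x)
  rw [hd.fderiv_norm_self, ← hτ.norm_add_map hz h.corner.norm_eq,
    ← (isSupportFunctional_of_hasFDerivAt_norm hg).apply_self, map_add T, h.map_eq, map_add,
    map_add] at hsum
  rw [map_sub]
  linarith

/-- Otherwise the derivatives of the norm of `Y` at `τ z + τ x` and `τ (-z) + τ x` have a common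
kernel vector, which forces the norm to be differentiable at the corner `τ x`. -/
lemma map_eq_of_differentiableAt (h : HasCornerDeriv τ T x a b k) (hX : Module.finrank ℝ X = 2)
    (hY : Module.finrank ℝ Y = 2) (hτ : IsOddSphereIsometry τ) {z : X} (hz : ‖z‖ = 1)
    (hd : DifferentiableAt ℝ (fun z : X => ‖z‖) (z + x))
    (hdneg : DifferentiableAt ℝ (fun z : X => ‖z‖) (-z + x))
    (hdτ : DifferentiableAt ℝ (fun z : Y => ‖z‖) (τ z + τ x))
    (hdτneg : DifferentiableAt ℝ (fun z : Y => ‖z‖) (τ (-z) + τ x)) : T z = τ z := by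
  have : FiniteDimensional ℝ Y := Module.finite_of_finrank_eq_succ hY
  have hx := h.corner.norm_eq
  by_contra hne
  have hker := h.apply_sub_eq_zero hX hτ hz hd hdτ.hasFDerivAt
  have hkerneg := h.apply_sub_eq_zero hX hτ (by rwa [norm_neg]) hdneg hdτneg.hasFDerivAt
  rw [hτ.map_neg z hz, map_neg, ← neg_sub', map_neg, neg_eq_zero] at hkerneg
  rw [hτ.map_neg z hz] at hdτneg
  have hle := norm_add_norm_le_max_of_apply_eq_zero hY
    (isSupportFunctional_of_hasFDerivAt_norm hdτ.hasFDerivAt)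
    (isSupportFunctional_of_hasFDerivAt_norm hdτneg.hasFDerivAt) (sub_ne_zero.2 (Ne.symm hne))
    hker hkerneg
  have hadd : τ z + τ x + (-τ z + τ x) = (2 : ℝ) • τ x := by module
  have hsub : τ z + τ x - (-τ z + τ x) = (2 : ℝ) • τ z := by module
  rw [hadd, hsub, norm_smul, norm_smul, hτ.norm_map z hz, hτ.norm_map x hx, max_self] at hle
  have hsmooth := differentiableAt_norm_add
    ((norm_add_le _ _).antisymm (by rwa [hadd, norm_smul, hτ.norm_map x hx])) hdτ
  rw [hadd] at hsmooth
  exact h.corner_map.not_differentiableAt ((differentiableAt_norm_smul two_ne_zero).2 hsmooth)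

lemma map_eq_of_sub_eq_smul (h : HasCornerDeriv τ T x a b k) (hX : Module.finrank ℝ X = 2)
    (hY : Module.finrank ℝ Y = 2) (hτ : IsOddSphereIsometry τ) {z : X} (hz : ‖z‖ = 1)
    (hzx : ‖z + x‖ = 2) (hne : z ≠ x) {r : ℝ} (hr : 0 ≤ r) (hzr : z - x = r • a) : T z = τ z := by
  have hx := h.corner.norm_eq
  have hτzx : ‖τ z + τ x‖ = 2 := by rw [hτ.norm_add_map hz hx, hzx]
  have hτne : τ z ≠ τ x := fun heq => hne (hτ.eq_of_map_eq hz hx heq)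
  obtain ⟨r', hr', hleft | hright⟩ := h.corner_map.exists_eq_smul_of_normDirDeriv_eq_zero hY
    (normDirDeriv_sub_eq_zero_of_norm_add_eq_two (hτ.norm_map x hx) (hτ.norm_map z hz) hτzx)
  · have hnorm := hτ.norm_sub_map z x hz hx
    rw [hleft, hzr, norm_smul, norm_smul, h.norm_left, Real.norm_of_nonneg hr,
      Real.norm_of_nonneg hr'] at hnorm
    obtain rfl := mul_right_cancel₀ (norm_ne_zero_iff.2 h.corner.left_ne_zero) hnorm
    rw [sub_eq_iff_eq_add.1 hzr, map_add, map_smul, ← hleft, h.map_eq, sub_add_cancel,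
      ← sub_eq_iff_eq_add.1 hzr]
  · obtain ⟨f, hfz, hfx, hf⟩ := exists_isSupportFunctional_eventually hX hz hx hne hzx
    obtain ⟨g, hgz, hgx, hg⟩ := exists_isSupportFunctional_eventually hY (hτ.norm_map z hz)
      (hτ.norm_map x hx) hτne hτzx
    have hgf := h.apply_map_eq hX hz (hasFDerivAt_norm_of_eventually hf)
      (hasFDerivAt_norm_of_eventually hg)
    have hr0 : r ≠ 0 := by rintro rfl; simp [sub_eq_zero, hne] at hzr
    have hr0' : r' ≠ 0 := by rintro rfl; simp [sub_eq_zero, hτne] at hright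
    have hfa : f a = 0 := by simpa [hfz, hfx, hr0] using congrArg f hzr
    have hfb : f b = 0 := by
      rw [← hgf]
      simpa [hgz, hgx, hr0'] using congrArg g hright
    have hk := congrArg f h.corner.add_eq
    rw [map_add, hfa, hfb, map_smul, hfx] at hk
    exact absurd (by simpa using hk) h.corner.pos.ne'

lemma map_eq_of_norm_add_eq_two (h : HasCornerDeriv τ T x a b k) (hX : Module.finrank ℝ X = 2)
    (hY : Module.finrank ℝ Y = 2) (hτ : IsOddSphereIsometry τ) {z : X} (hz : ‖z‖ = 1)
    (hzx : ‖z + x‖ = 2) : T z = τ z := by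
  rcases eq_or_ne z x with rfl | hne
  · exact h.map_eq
  obtain ⟨r, hr, hleft | hright⟩ := h.corner.exists_eq_smul_of_normDirDeriv_eq_zero hX
    (normDirDeriv_sub_eq_zero_of_norm_add_eq_two h.corner.norm_eq hz hzx)
  · exact h.map_eq_of_sub_eq_smul hX hY hτ hz hzx hne hr hleft
  · exact h.symm.map_eq_of_sub_eq_smul hX hY hτ hz hzx hne hr hright

end HasCornerDeriv

end CornerDeriv

section Extension

variable {X Y : Type*} [NormedAddCommGroup X] [NormedSpace ℝ X] [NormedAddCommGroup Y]
  [NormedSpace ℝ Y] {τ : X → Y} {T : X →ₗ[ℝ] Y} {x a b : X} {k : ℝ}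

lemma IsOddSphereIsometry.countable_not_differentiableAt (hτ : IsOddSphereIsometry τ)
    (hX : Module.finrank ℝ X = 2) (hY : Module.finrank ℝ Y = 2) (hx : ‖x‖ = 1) :
    {z : X | ‖z‖ = 1 ∧ ‖z - x‖ ≠ 2 ∧ ¬ (DifferentiableAt ℝ (fun w : X => ‖w‖) (z + x) ∧
      DifferentiableAt ℝ (fun w : Y => ‖w‖) (τ z + τ x))}.Countable := by
  have hdom := countable_not_differentiableAt_norm_add hX hx
  have hcod := countable_not_differentiableAt_norm_add hY (hτ.norm_map x hx)
  have hpre : {z : X | ‖z‖ = 1 ∧ τ z ∈ {w : Y | (‖w‖ = 1 ∧ ‖w - τ x‖ ≠ 2) ∧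
      ¬ DifferentiableAt ℝ (fun v : Y => ‖v‖) (w + τ x)}}.Countable :=
    MapsTo.countable_of_injOn (f := τ) (fun z hz => hz.2)
      (fun z hz w hw => hτ.eq_of_map_eq hz.1 hw.1) hcod
  refine (hdom.union hpre).mono fun z ⟨hz, hzx, hnd⟩ => ?_
  rcases not_and_or.1 hnd with hnd | hnd
  · exact Or.inl ⟨⟨hz, hzx⟩, hnd⟩
  · exact Or.inr ⟨hz, ⟨hτ.norm_map z hz, by rwa [hτ.norm_sub_map z x hz hx]⟩, hnd⟩

lemma HasCornerDeriv.countable_map_ne (h : HasCornerDeriv τ T x a b k)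
    (hX : Module.finrank ℝ X = 2) (hY : Module.finrank ℝ Y = 2) (hτ : IsOddSphereIsometry τ) :
    {z : X | ‖z‖ = 1 ∧ T z ≠ τ z}.Countable := by
  have hC := hτ.countable_not_differentiableAt hX hY h.corner.norm_eq
  refine (hC.union (hC.preimage_of_injOn neg_injective.injOn)).mono fun z ⟨hz, hne⟩ => ?_
  have hzneg : ‖-z‖ = 1 := by rwa [norm_neg]
  have hadd : ‖z + x‖ ≠ 2 := mt (h.map_eq_of_norm_add_eq_two hX hY hτ hz) hne
  have hsub : ‖z - x‖ ≠ 2 := by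
    intro hzx
    have := h.map_eq_of_norm_add_eq_two hX hY hτ hzneg (by rw [← norm_neg, neg_add', neg_neg, hzx])
    rw [map_neg, hτ.map_neg z hz] at this
    exact hne (neg_injective this)
  by_contra hsmooth
  obtain ⟨hd, hdτ⟩ := not_not.1 fun hnd => hsmooth (Or.inl ⟨hz, hsub, hnd⟩)
  obtain ⟨hdneg, hdτneg⟩ := not_not.1 fun hnd =>
    hsmooth (Or.inr ⟨hzneg, by rwa [← neg_add', norm_neg], hnd⟩)
  exact hne (h.map_eq_of_differentiableAt hX hY hτ hz hd hdneg hdτ hdτneg)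

lemma HasCornerDeriv.eqOn (h : HasCornerDeriv τ T x a b k) (hX : Module.finrank ℝ X = 2)
    (hY : Module.finrank ℝ Y = 2) (hτ : IsOddSphereIsometry τ) :
    EqOn T τ (Metric.sphere 0 1) := by
  have : FiniteDimensional ℝ X := Module.finite_of_finrank_eq_succ hX
  have hcountable := h.countable_map_ne hX hY hτ
  have heq : EqOn T τ (Metric.sphere 0 1 \ {z : X | ‖z‖ = 1 ∧ T z ≠ τ z}) := by
    rintro z ⟨hz, hgood⟩
    by_contra hne
    exact hgood ⟨by simpa using hz, hne⟩
  exact heq.of_subset_closure T.continuous_of_finiteDimensional.continuousOn hτ.continuousOn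
    sdiff_subset fun z hz => mem_closure_sphere_diff_of_countable hX hcountable (by simpa using hz)

lemma exists_linearIsometryEquiv_of_eqOn [FiniteDimensional ℝ X] [FiniteDimensional ℝ Y]
    (hdim : Module.finrank ℝ X = Module.finrank ℝ Y) (hT : ∀ u, ‖u‖ = 1 → ‖T u‖ = 1) :
    ∃ L : X ≃ₗᵢ[ℝ] Y, ∀ u, L u = T u := by
  have hnorm (v : X) : ‖T v‖ = ‖v‖ := by
    rcases eq_or_ne v 0 with rfl | hv
    · simp
    · rw [← NormedSpace.norm_smul_normalize v, map_smul, norm_smul,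
        hT _ (NormedSpace.norm_normalize hv), norm_smul, NormedSpace.norm_normalize hv]
  exact ⟨LinearIsometry.toLinearIsometryEquiv ⟨T, hnorm⟩ hdim, fun u => rfl⟩

end Extension

theorem stmt8_general {X Y : Type*} [NormedAddCommGroup X] [NormedSpace ℝ X]
    [NormedAddCommGroup Y] [NormedSpace ℝ Y]
    (hdimX : Module.finrank ℝ X = 2) (hdimY : Module.finrank ℝ Y = 2)
    (x : X) (hx : ‖x‖ = 1) (hndx : ¬ DifferentiableAt ℝ (fun z : X => ‖z‖) x)
    (τ : X → Y) (hmap : ∀ u : X, ‖u‖ = 1 → ‖τ u‖ = 1)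
    (hsurj : ∀ w : Y, ‖w‖ = 1 → ∃ u : X, ‖u‖ = 1 ∧ τ u = w)
    (hiso : ∀ u v : X, ‖u‖ = 1 → ‖v‖ = 1 → ‖τ u - τ v‖ = ‖u - v‖) :
    ∃ T : X ≃ₗᵢ[ℝ] Y, ∀ u : X, ‖u‖ = 1 → T u = τ u := by
  have : FiniteDimensional ℝ X := Module.finite_of_finrank_eq_succ hdimX
  have : FiniteDimensional ℝ Y := Module.finite_of_finrank_eq_succ hdimY
  have hτ : IsSphereIsometry τ := ⟨hmap, hiso⟩
  have hodd : IsOddSphereIsometry τ := ⟨hτ, fun u hu => hτ.map_neg hdimX hsurj hu⟩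
  obtain ⟨T, a, b, k, hT⟩ := hodd.exists_hasCornerDeriv hdimX hdimY hx hndx
  have heq (u : X) (hu : ‖u‖ = 1) : T u = τ u := hT.eqOn hdimX hdimY hodd (by simpa using hu)
  obtain ⟨L, hL⟩ := exists_linearIsometryEquiv_of_eqOn (hdimX.trans hdimY.symm)
    fun u hu => (congrArg norm (heq u hu)).trans (hmap u hu)
  exact ⟨L, fun u hu => (hL u).trans (heq u hu)⟩

/-- Theorem `Piece`. Let `X` be a two-dimensional real normed space
whose unit sphere is piecewise `C¹`-differentiable (the set of unit vectors where the
norm is not differentiable is finite) and contains two linearly independent points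
`x, x̄` of non-differentiability of the norm. Then for any two-dimensional normed space
`Y`, every surjective isometry `τ : S_X → S_Y` is the restriction of a surjective linear
isometry `X → Y`. -/
theorem stmt8 {X Y : Type*} [NormedAddCommGroup X] [NormedSpace ℝ X]
    [NormedAddCommGroup Y] [NormedSpace ℝ Y]
    (hdimX : Module.finrank ℝ X = 2) (hdimY : Module.finrank ℝ Y = 2)
    (hpiece : {u : X | ‖u‖ = 1 ∧ ¬ DifferentiableAt ℝ (fun z : X => ‖z‖) u}.Finite)
    (x xbar : X) (hx : ‖x‖ = 1) (hxbar : ‖xbar‖ = 1)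
    (hndx : ¬ DifferentiableAt ℝ (fun z : X => ‖z‖) x)
    (hndxbar : ¬ DifferentiableAt ℝ (fun z : X => ‖z‖) xbar)
    (hindep : LinearIndependent ℝ ![x, xbar])
    (τ : X → Y)
    (hmap : ∀ u : X, ‖u‖ = 1 → ‖τ u‖ = 1)
    (hsurj : ∀ w : Y, ‖w‖ = 1 → ∃ u : X, ‖u‖ = 1 ∧ τ u = w)
    (hiso : ∀ u v : X, ‖u‖ = 1 → ‖v‖ = 1 → ‖τ u - τ v‖ = ‖u - v‖) :
    ∃ T : X ≃ₗᵢ[ℝ] Y, ∀ u : X, ‖u‖ = 1 → T u = τ u :=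
  stmt8_general hdimX hdimY x hx hndx τ hmap hsurj hiso
end
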